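/- arXiv:1206.5197 — 3 statements merged into one kernel-verified Lean document; each statement's English description precedes it below -/
import Mathlib

section
/- Let E ⊆ ℝ^n be a Lebesgue-measurable set and f : E → ℝ^m a measurable mapping. Suppose that for each j = 1, …, n the mapping f has an approximate partial derivative ap ∂_j f(x) along the coordinate direction e_j at almost every point x ∈ E. Then f is approximately differentiable at almost every point of E, and at almost every such point the approximate differential L of f satisfies L(e_j) = ap ∂_j f(x) for all j = 1, …, n. -/
open MeasureTheory Metric Filter Set Function
open scoped Topology ENNReal NNReal

/-- `Y` has density `d` at the point `x` with respect to the measure `μ`. -/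
def HasDensityAt {X : Type*} [PseudoMetricSpace X] [MeasurableSpace X]
    (μ : Measure X) (Y : Set X) (x : X) (d : ℝ≥0∞) : Prop :=
  Tendsto (fun r : ℝ => μ (Y ∩ ball x r) / μ (ball x r)) (𝓝[>] (0 : ℝ)) (𝓝 d)

/-- `L` is an approximate differential of `f` (as a map defined on `E`) at `a`. -/
def IsApproxDifferential {n m : ℕ} (E : Set (EuclideanSpace ℝ (Fin n)))
    (f : EuclideanSpace ℝ (Fin n) → EuclideanSpace ℝ (Fin m))
    (a : EuclideanSpace ℝ (Fin n))
    (L : EuclideanSpace ℝ (Fin n) →ₗ[ℝ] EuclideanSpace ℝ (Fin m)) : Prop :=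
  ∀ ε : ℝ, 0 < ε →
    HasDensityAt volume {x ∈ E | ε * ‖x - a‖ < ‖f x - f a - L (x - a)‖} a 0

/-- `v` is an approximate partial derivative of `f` (as a map defined on `E`) along the
coordinate direction `e j` at `x`. -/
def HasApproxPartialDerivAt {n m : ℕ} (E : Set (EuclideanSpace ℝ (Fin n)))
    (f : EuclideanSpace ℝ (Fin n) → EuclideanSpace ℝ (Fin m)) (j : Fin n)
    (x : EuclideanSpace ℝ (Fin n)) (v : EuclideanSpace ℝ (Fin m)) : Prop :=
  ∀ ε : ℝ, 0 < ε →
    HasDensityAt (volume : Measure ℝ)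
      {t : ℝ | x + t • EuclideanSpace.single j (1 : ℝ) ∈ E ∧
        ε * |t| < ‖f (x + t • EuclideanSpace.single j (1 : ℝ)) - f x - t • v‖} 0 0

/-!
Stepanov's argument, carried out one direction at a time. Call `f` Lipschitz along a subspace `V` on
a set `K` if it is Lipschitz on pairs of nearby points of `K` whose difference lies in `V`. Suppose
that along `e` the difference quotients of `f` are bounded off a set of times of density zero. Then
almost every point of `K` lies in one of countably many measurable pieces on which both the bound
and the proportion of bad times at small scales are uniform. On such a piece `f` is Lipschitz along
`V ⊔ span {e}`: if `x - y = w + d • e` with `w ∈ V`, the bad times of `x` and of `y` together are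
too few to prevent a common good time `t`, and one passes from `x` to `x + t • e`, then by `-w` to
`y + (t + d) • e`, and back to `y`. Once the directions span the whole space, Rademacher's theorem
applies on each piece, and at a density point of the piece a derivative within it is an approximate
derivative.
-/

section Density

variable {X : Type*} [PseudoMetricSpace X] [MeasurableSpace X] {μ : Measure X} {Y Z : Set X} {x : X}

lemma HasDensityAt.zero_mono_of_eventually (hY : HasDensityAt μ Y x 0)
    (hZY : ∀ᶠ z in 𝓝 x, z ∈ Z → z ∈ Y) : HasDensityAt μ Z x 0 := by
  obtain ⟨δ, hδ, hsub⟩ := Metric.eventually_nhds_iff_ball.1 hZY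
  refine tendsto_of_tendsto_of_tendsto_of_le_of_le' tendsto_const_nhds hY
    (Eventually.of_forall fun _ => zero_le) ?_
  filter_upwards [Ioo_mem_nhdsGT hδ] with r hr
  gcongr ?_ / _
  exact measure_mono fun z hz => ⟨hsub z (ball_subset_ball hr.2.le hz.2) hz.1, hz.2⟩

lemma HasDensityAt.zero_mono (hY : HasDensityAt μ Y x 0) (hZY : Z ⊆ Y) : HasDensityAt μ Z x 0 :=
  hY.zero_mono_of_eventually (Eventually.of_forall hZY)

lemma HasDensityAt.zero_union (hY : HasDensityAt μ Y x 0) (hZ : HasDensityAt μ Z x 0) :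
    HasDensityAt μ (Y ∪ Z) x 0 := by
  have hsum := Tendsto.add hY hZ
  rw [add_zero] at hsum
  refine tendsto_of_tendsto_of_tendsto_of_le_of_le tendsto_const_nhds hsum (fun _ => zero_le)
    fun r => ?_
  calc μ ((Y ∪ Z) ∩ ball x r) / μ (ball x r)
      ≤ (μ (Y ∩ ball x r) + μ (Z ∩ ball x r)) / μ (ball x r) := by
        rw [union_inter_distrib_right]
        gcongr
        exact measure_union_le _ _
    _ = _ := ENNReal.add_div

/-- `Y` fills at most the proportion `c` of each ball around `x` of radius less than `δ`. This is
the quantitative form of having density zero, with the scale made explicit. -/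
def IsSparseAt (μ : Measure X) (Y : Set X) (x : X) (c : ℝ≥0) (δ : ℝ) : Prop :=
  ∀ r ∈ Ioo 0 δ, μ (Y ∩ ball x r) ≤ c * μ (ball x r)

lemma IsSparseAt.mono {c c' : ℝ≥0} {δ δ' : ℝ} (h : IsSparseAt μ Y x c δ) (hc : c ≤ c')
    (hδ : δ' ≤ δ) : IsSparseAt μ Y x c' δ' := fun r hr =>
  (h r ⟨hr.1, hr.2.trans_le hδ⟩).trans (by gcongr)

lemma hasDensityAt_zero_iff_isSparseAt :
    HasDensityAt μ Y x 0 ↔ ∀ c : ℝ≥0, 0 < c → ∃ δ > 0, IsSparseAt μ Y x c δ := by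
  have div_le_iff {c : ℝ≥0} (hc : 0 < c) (r : ℝ) :
      μ (Y ∩ ball x r) / μ (ball x r) ≤ c ↔ μ (Y ∩ ball x r) ≤ c * μ (ball x r) :=
    ENNReal.div_le_iff_le_mul (.inr ENNReal.coe_ne_top) (.inr (by exact_mod_cast hc.ne'))
  rw [HasDensityAt, ENNReal.tendsto_nhds_zero]
  constructor
  · intro h c hc
    obtain ⟨δ, hδ, hle⟩ := (nhdsGT_basis 0).eventually_iff.1 (h c (by exact_mod_cast hc))
    exact ⟨δ, hδ, fun r hr => (div_le_iff hc r).1 (hle hr)⟩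
  · intro h ε hε
    obtain ⟨c, hc, hcε⟩ := ENNReal.lt_iff_exists_nnreal_btwn.1 hε
    replace hc : 0 < c := by exact_mod_cast hc
    obtain ⟨δ, hδ, hsparse⟩ := h c hc
    filter_upwards [Ioo_mem_nhdsGT hδ] with r hr
    exact ((div_le_iff hc r).2 (hsparse r hr)).trans hcε.le

lemma hasDensityAt_zero_iff_forall_nat :
    HasDensityAt μ Y x 0 ↔
      ∀ n : ℕ, ∃ N : ℕ, IsSparseAt μ Y x (1 / (n + 1)) (1 / ((N : ℝ) + 1)) := by
  rw [hasDensityAt_zero_iff_isSparseAt]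
  constructor
  · intro h n
    obtain ⟨δ, hδ, hsparse⟩ := h (1 / (n + 1)) (by positivity)
    obtain ⟨N, hN⟩ := exists_nat_one_div_lt hδ
    exact ⟨N, hsparse.mono le_rfl hN.le⟩
  · intro h c hc
    obtain ⟨n, hn⟩ := exists_nat_one_div_lt hc
    obtain ⟨N, hsparse⟩ := h n
    exact ⟨_, by positivity, hsparse.mono hn.le le_rfl⟩

/-- Rational radii suffice because an open ball is the increasing union of the smaller concentric
balls of rational radius. -/
lemma isSparseAt_iff_forall_rat {c : ℝ≥0} {δ : ℝ} :
    IsSparseAt μ Y x c δ ↔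
      ∀ q : ℚ, (q : ℝ) ∈ Ioo 0 δ → μ (Y ∩ ball x q) ≤ c * μ (ball x q) := by
  refine ⟨fun h q => h q, fun h r hr => ?_⟩
  have ball_eq : Y ∩ ball x r = ⋃ q : {q : ℚ // (q : ℝ) ∈ Ioo 0 r}, Y ∩ ball x q := by
    ext y
    simp only [mem_inter_iff, mem_ball, mem_iUnion]
    constructor
    · rintro ⟨hy, hyr⟩
      obtain ⟨q, hyq, hqr⟩ := exists_rat_btwn hyr
      exact ⟨⟨q, dist_nonneg.trans_lt hyq, hqr⟩, hy, hyq⟩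
    · rintro ⟨q, hy, hyq⟩
      exact ⟨hy, hyq.trans q.2.2⟩
  have ball_mono : Monotone fun q : {q : ℚ // (q : ℝ) ∈ Ioo 0 r} => Y ∩ ball x q :=
    fun p q hpq => inter_subset_inter_right _ (ball_subset_ball (by exact_mod_cast hpq))
  rw [ball_eq, ball_mono.measure_iUnion]
  refine iSup_le fun q => (h q ⟨q.2.1, q.2.2.trans hr.2⟩).trans ?_
  gcongr
  exact q.2.2.le

section Slices

variable {W : Type*} [MeasurableSpace W] [OpensMeasurableSpace X] [SFinite μ] {B : Set (W × X)}

lemma measurableSet_setOf_isSparseAt_slice (hB : MeasurableSet B) (x : X) (c : ℝ≥0) (δ : ℝ) :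
    MeasurableSet {w | IsSparseAt μ {y | (w, y) ∈ B} x c δ} := by
  have measurable_slice (r : ℝ) : Measurable fun w => μ ({y | (w, y) ∈ B} ∩ ball x r) :=
    measurable_measure_prodMk_left (hB.inter (measurable_snd measurableSet_ball))
  simp only [isSparseAt_iff_forall_rat, ofPred_forall]
  exact .iInter fun q => .iInter fun _ => measurableSet_le (measurable_slice q) measurable_const

lemma measurableSet_setOf_hasDensityAt_zero_slice (hB : MeasurableSet B) (x : X) :
    MeasurableSet {w | HasDensityAt μ {y | (w, y) ∈ B} x 0} := by
  simp only [hasDensityAt_zero_iff_forall_nat, ofPred_forall, ofPred_exists]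
  exact .iInter fun n => .iUnion fun N => measurableSet_setOf_isSparseAt_slice hB x _ _

end Slices

end Density

section DensityPoints

variable {X : Type*} [NormedAddCommGroup X] [NormedSpace ℝ X] [FiniteDimensional ℝ X]
  [MeasurableSpace X] [BorelSpace X] (μ : Measure X) [μ.IsAddHaarMeasure] {K : Set X}

lemma ae_hasDensityAt_compl_zero (hK : MeasurableSet K) :
    ∀ᵐ x ∂μ, x ∈ K → HasDensityAt μ Kᶜ x 0 := by
  filter_upwards [Besicovitch.ae_tendsto_measure_inter_div_of_measurableSet μ hK.compl]
    with x hx hxK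
  rw [indicator_of_notMem (not_not.2 hxK)] at hx
  refine tendsto_of_tendsto_of_tendsto_of_le_of_le' tendsto_const_nhds hx
    (Eventually.of_forall fun _ => zero_le) ?_
  filter_upwards [self_mem_nhdsWithin] with r (hr : 0 < r)
  rw [Measure.addHaar_closedBall μ x hr.le, Measure.addHaar_ball_of_pos μ x hr]
  gcongr
  exact ball_subset_closedBall

/-- By Fubini along the lines parallel to `e`, this is the density theorem on `ℝ`. -/
lemma ae_hasDensityAt_line_compl_zero (hK : MeasurableSet K) (e : X) :
    ∀ᵐ x ∂μ, x ∈ K → HasDensityAt volume {t : ℝ | x + t • e ∉ K} 0 0 := by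
  have measurable_line : Measurable fun p : X × ℝ => p.1 + p.2 • e := by fun_prop
  have measurableSet_good :
      MeasurableSet {x | x ∈ K → HasDensityAt volume {t : ℝ | x + t • e ∉ K} 0 0} :=
    hK.imp (measurableSet_setOf_hasDensityAt_zero_slice (measurable_line hK.compl) 0)
  refine ae_mem_of_ae_add_linearMap_mem (LinearMap.toSpanSingleton ℝ X e) volume μ
    measurableSet_good fun y => ?_
  have measurableSet_line : MeasurableSet {t : ℝ | y + t • e ∈ K} :=
    (show Measurable fun t : ℝ => y + t • e by fun_prop) hK
  filter_upwards [ae_hasDensityAt_compl_zero volume measurableSet_line] with s hs hsK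
  refine (hs hsK).congr fun r => ?_
  rw [← measure_preimage_add_right volume s, Real.volume_ball, Real.volume_ball]
  congr 2
  ext t
  simp [add_smul, add_assoc, add_comm (t • e), dist_eq_norm]

end DensityPoints

section ApproximateDerivatives

variable {X F : Type*} [NormedAddCommGroup X] [NormedSpace ℝ X] [NormedAddCommGroup F]
  [NormedSpace ℝ F]

/-- `L` is an approximate derivative at `a`, with respect to `μ`, of `f` as a map defined on `S`. -/
def HasApproxFDerivWithinAt [MeasurableSpace X] (μ : Measure X) (f : X → F) (L : X →L[ℝ] F)
    (S : Set X) (a : X) : Prop :=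
  ∀ ε : ℝ, 0 < ε → HasDensityAt μ {x ∈ S | ε * ‖x - a‖ < ‖f x - f a - L (x - a)‖} a 0

/-- `v` is an approximate derivative at `x` along `e` of `f` as a map defined on `S`; the
approximate counterpart of `HasLineDerivWithinAt`. -/
def HasApproxLineDerivWithinAt (f : X → F) (v : F) (S : Set X) (x e : X) : Prop :=
  HasApproxFDerivWithinAt volume (fun t : ℝ => f (x + t • e)) (.toSpanSingleton ℝ v)
    ((fun t : ℝ => x + t • e) ⁻¹' S) 0

/-- The difference quotients at `x` along `e` of `f`, as a map defined on `S`, have a finite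
approximate upper limit. -/
def IsApproxLineLipschitzWithinAt (f : X → F) (S : Set X) (x e : X) : Prop :=
  ∃ C : ℝ, HasDensityAt volume {t : ℝ | x + t • e ∈ S ∧ C * |t| < ‖f (x + t • e) - f x‖} 0 0

variable {f : X → F} {S K : Set X} {x e : X}

lemma hasApproxLineDerivWithinAt_iff {v : F} :
    HasApproxLineDerivWithinAt f v S x e ↔ ∀ ε : ℝ, 0 < ε → HasDensityAt volume
      {t : ℝ | x + t • e ∈ S ∧ ε * |t| < ‖f (x + t • e) - f x - t • v‖} 0 0 := by
  simp [HasApproxLineDerivWithinAt, HasApproxFDerivWithinAt]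

lemma HasApproxLineDerivWithinAt.isApproxLineLipschitzWithinAt {v : F}
    (h : HasApproxLineDerivWithinAt f v S x e) : IsApproxLineLipschitzWithinAt f S x e := by
  refine ⟨1 + ‖v‖, (hasApproxLineDerivWithinAt_iff.1 h 1 one_pos).zero_mono ?_⟩
  rintro t ⟨htS, ht⟩
  refine ⟨htS, ?_⟩
  calc 1 * |t| = (1 + ‖v‖) * |t| - ‖t • v‖ := by rw [norm_smul, Real.norm_eq_abs]; ring
    _ < ‖f (x + t • e) - f x‖ - ‖t • v‖ := by gcongr
    _ ≤ ‖f (x + t • e) - f x - t • v‖ := norm_sub_norm_le _ _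

lemma hasApproxFDerivWithinAt_of_hasFDerivWithinAt [MeasurableSpace X] {μ : Measure X}
    {L : X →L[ℝ] F} (hL : HasFDerivWithinAt f L K x) (hK : HasDensityAt μ Kᶜ x 0) (S : Set X) :
    HasApproxFDerivWithinAt μ f L S x := by
  intro ε hε
  refine hK.zero_mono_of_eventually ?_
  filter_upwards [eventually_nhdsWithin_iff.1 (hL.isLittleO.def hε)] with y hy hyε hyK
  exact hyε.2.not_ge (hy hyK)

lemma hasApproxLineDerivWithinAt_of_hasFDerivWithinAt {L : X →L[ℝ] F}
    (hL : HasFDerivWithinAt f L K x) (hK : HasDensityAt volume {t : ℝ | x + t • e ∉ K} 0 0)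
    (S : Set X) : HasApproxLineDerivWithinAt f (L e) S x e :=
  hasApproxFDerivWithinAt_of_hasFDerivWithinAt (hL.hasLineDerivWithinAt e) hK _

end ApproximateDerivatives

section Refinement

variable {X F : Type*} [NormedAddCommGroup X] [NormedSpace ℝ X] [NormedAddCommGroup F]

/-- The times `t` at which the move from `x` to `x + t • e` leaves `K` or changes `f` by more than
`C * |t|`. -/
def badTimes (f : X → F) (K : Set X) (e : X) (C : ℝ) (x : X) : Set ℝ :=
  {t | x + t • e ∈ K → C * |t| < ‖f (x + t • e) - f x‖}

/-- The points of `K` whose bad times along `e` are sparse at scales below `δ`. The proportion is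
chosen less than `1 / 4` so that the good times of any two points can be matched, see
`exists_notMem_and_add_notMem`. -/
def lineRefinement (f : X → F) (K : Set X) (e : X) (C δ : ℝ) : Set X :=
  {x ∈ K | IsSparseAt volume (badTimes f K e C x) 0 (1 / 8) δ}

/-- `f` is uniformly Lipschitz on pairs of nearby points of `K` whose difference lies in `V`. -/
def LipschitzAlong (V : Submodule ℝ X) (f : X → F) (K : Set X) : Prop :=
  ∃ C : ℝ≥0, ∃ δ > 0, ∀ x ∈ K, ∀ y ∈ K, x - y ∈ V → ‖x - y‖ < δ → ‖f x - f y‖ ≤ C * ‖x - y‖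

variable {f : X → F} {S K : Set X} {e : X}

lemma lipschitzAlong_bot (f : X → F) (K : Set X) : LipschitzAlong ⊥ f K := by
  refine ⟨0, 1, one_pos, fun x _ y _ hxy _ => ?_⟩
  simp [sub_eq_zero.1 ((Submodule.mem_bot ℝ).1 hxy)]

lemma LipschitzAlong.exists_lipschitzOnWith_ball (h : LipschitzAlong ⊤ f K) :
    ∃ C : ℝ≥0, ∃ δ > 0, ∀ x, LipschitzOnWith C f (K ∩ ball x δ) := by
  obtain ⟨C, δ, hδ, hlip⟩ := h
  refine ⟨C, δ / 2, half_pos hδ, fun x => .of_dist_le_mul fun y hy z hz => ?_⟩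
  have hyz : dist y z < δ := (dist_triangle_right y z x).trans_lt
    (by linarith [mem_ball.1 hy.2, mem_ball.1 hz.2])
  rw [dist_eq_norm] at hyz ⊢
  rw [dist_eq_norm]
  exact hlip y hy.1 z hz.1 trivial hyz

lemma exists_notMem_and_add_notMem {Y Z : Set ℝ} {ρ d : ℝ} (hρ : 0 < ρ) (hd : |d| ≤ ρ)
    (hY : volume (Y ∩ ball 0 ρ) ≤ (1 / 8 : ℝ≥0) * volume (ball (0 : ℝ) ρ))
    (hZ : volume (Z ∩ ball 0 ρ) ≤ (1 / 8 : ℝ≥0) * volume (ball (0 : ℝ) ρ)) :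
    ∃ t, |t| < ρ ∧ |t + d| < ρ ∧ t ∉ Y ∧ t + d ∉ Z := by
  by_contra! hbad
  have cover : ball (-(d / 2)) (ρ / 2) ⊆
      (Y ∩ ball 0 ρ) ∪ (fun t => t + d) ⁻¹' (Z ∩ ball 0 ρ) := by
    intro t ht
    rw [Real.ball_eq_Ioo] at ht
    have ht0 : |t| < ρ := abs_lt.2 (by constructor <;> linarith [ht.1, ht.2, abs_le.1 hd])
    have htd : |t + d| < ρ := abs_lt.2 (by constructor <;> linarith [ht.1, ht.2, abs_le.1 hd])
    by_cases htY : t ∈ Y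
    · exact .inl ⟨htY, by simpa using ht0⟩
    · exact .inr ⟨hbad t ht0 htd htY, by simpa using htd⟩
  have volume_le : ENNReal.ofReal ρ ≤ ENNReal.ofReal (ρ / 2) := calc
    ENNReal.ofReal ρ = volume (ball (-(d / 2)) (ρ / 2)) := by
        rw [Real.volume_ball, mul_div_cancel₀ _ two_ne_zero]
    _ ≤ volume (Y ∩ ball 0 ρ) + volume (Z ∩ ball 0 ρ) := by
        rw [← measure_preimage_add_right volume d (Z ∩ ball 0 ρ)]
        exact (measure_mono cover).trans (measure_union_le _ _)
    _ ≤ (1 / 8 : ℝ≥0) * volume (ball (0 : ℝ) ρ) + (1 / 8 : ℝ≥0) * volume (ball (0 : ℝ) ρ) := by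
        gcongr
    _ = ENNReal.ofReal (ρ / 2) := by
        rw [Real.volume_ball, ← ENNReal.ofReal_coe_nnreal, ← ENNReal.ofReal_mul (by positivity),
          ← ENNReal.ofReal_add (by positivity) (by positivity)]
        congr 1
        push_cast
        ring
  rw [ENNReal.ofReal_le_ofReal_iff (by positivity)] at volume_le
  linarith

lemma exists_norm_components_le (V : Submodule ℝ X) [FiniteDimensional ℝ V] (e : X) :
    ∃ M > 0, ∀ w ∈ V ⊔ Submodule.span ℝ {e},
      ∃ d : ℝ, w - d • e ∈ V ∧ |d| ≤ M * ‖w‖ ∧ ‖w - d • e‖ ≤ M * ‖w‖ := by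
  let T : V × ℝ →L[ℝ] X := V.subtypeL.coprod (.toSpanSingleton ℝ e)
  have range_T : T.range = V ⊔ Submodule.span ℝ {e} := by
    simp [T, LinearMap.range_coprod, LinearMap.span_singleton_eq_range]
  obtain ⟨M, hM, hpre⟩ := T.rangeRestrict.exists_preimage_norm_le
    T.toLinearMap.surjective_rangeRestrict
  refine ⟨M, hM, fun w hw => ?_⟩
  obtain ⟨⟨v, d⟩, hvd, hnorm⟩ := hpre ⟨w, range_T ▸ hw⟩
  have hw : w - d • e = v := by
    rw [sub_eq_iff_eq_add]
    exact (congrArg Subtype.val hvd).symm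
  refine ⟨d, ?_⟩
  rw [hw]
  exact ⟨v.2, (norm_snd_le (v, d)).trans hnorm, (norm_fst_le (v, d)).trans hnorm⟩

lemma LipschitzAlong.sup_span_singleton {V : Submodule ℝ X} [FiniteDimensional ℝ V]
    (h : LipschitzAlong V f K) (e : X) (C : ℝ≥0) {δ : ℝ} (hδ : 0 < δ) :
    LipschitzAlong (V ⊔ Submodule.span ℝ {e}) f (lineRefinement f K e C δ) := by
  obtain ⟨C', δ', hδ', hlip⟩ := h
  obtain ⟨M, hM, hcomp⟩ := exists_norm_components_le V e
  lift M to ℝ≥0 using hM.le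
  refine ⟨(2 * C + C') * M, min δ δ' / M, by positivity, fun x hx y hy hxy hlt => ?_⟩
  rcases eq_or_ne x y with rfl | hne
  · simp
  obtain ⟨d, hdV, hd, hw⟩ := hcomp (x - y) hxy
  set ρ := M * ‖x - y‖ with hρ
  have hρ_pos : 0 < ρ := mul_pos hM (norm_pos_iff.2 (sub_ne_zero.2 hne))
  obtain ⟨hρδ, hρδ'⟩ : ρ < δ ∧ ρ < δ' := lt_min_iff.1 (by rwa [lt_div_iff₀' hM] at hlt)
  obtain ⟨t, ht, htd, hxt, hyt⟩ := exists_notMem_and_add_notMem hρ_pos hd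
    (hx.2 ρ ⟨hρ_pos, hρδ⟩) (hy.2 ρ ⟨hρ_pos, hρδ⟩)
  simp only [badTimes, mem_ofPred_eq, Classical.not_imp, not_lt] at hxt hyt
  have hdiff : x + t • e - (y + (t + d) • e) = x - y - d • e := by module
  have hmid := hlip _ hxt.1 _ hyt.1 (hdiff ▸ hdV) (hdiff ▸ hw.trans_lt hρδ')
  calc ‖f x - f y‖
      = ‖(f (x + t • e) - f (y + (t + d) • e)) - (f (x + t • e) - f x)
          + (f (y + (t + d) • e) - f y)‖ := by congr 1; abel
    _ ≤ ‖f (x + t • e) - f (y + (t + d) • e)‖ + ‖f (x + t • e) - f x‖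
          + ‖f (y + (t + d) • e) - f y‖ :=
        (norm_add_le _ _).trans (by gcongr; exact norm_sub_le _ _)
    _ ≤ C' * ‖x + t • e - (y + (t + d) • e)‖ + C * |t| + C * |t + d| :=
        add_le_add (add_le_add hmid hxt.2) hyt.2
    _ ≤ C' * ρ + C * ρ + C * ρ := by rw [hdiff]; gcongr
    _ = ↑((2 * C + C') * M) * ‖x - y‖ := by rw [hρ]; push_cast; ring

lemma measurableSet_lineRefinement [MeasurableSpace X] [BorelSpace X] [SecondCountableTopology X]
    [MeasurableSpace F] [BorelSpace F] [SecondCountableTopology F]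
    (hK : MeasurableSet K) (hf : Measurable fun x : K => f x) (e : X) (C δ : ℝ) :
    MeasurableSet (lineRefinement f K e C δ) := by
  obtain ⟨g, hg, hgf⟩ := (MeasurableEmbedding.subtype_coe hK).exists_measurable_extend hf
    fun _ => ⟨0⟩
  have hgf' (y : X) (hy : y ∈ K) : f y = g y := (congrFun hgf ⟨y, hy⟩).symm
  have measurable_line : Measurable fun p : X × ℝ => p.1 + p.2 • e := by fun_prop
  have measurableSet_badTimes : MeasurableSet {p : X × ℝ | p.2 ∈ badTimes g K e C p.1} :=
    MeasurableSet.imp (measurable_line hK) (measurableSet_lt (by fun_prop) (by fun_prop))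
  convert hK.inter (measurableSet_setOf_isSparseAt_slice (μ := volume) measurableSet_badTimes
    0 (1 / 8) δ) using 1
  ext x
  refine and_congr_right fun hxK => ?_
  have badTimes_eq : badTimes f K e C x = badTimes g K e C x :=
    Set.ext fun t => forall_congr' fun htK => by rw [hgf' _ htK, hgf' _ hxK]
  rw [badTimes_eq]
  rfl

variable [FiniteDimensional ℝ X] [MeasurableSpace X] [BorelSpace X] {μ : Measure X}
  [μ.IsAddHaarMeasure]

lemma ae_exists_mem_lineRefinement (hK : MeasurableSet K) (hKS : K ⊆ S)
    (hS : ∀ᵐ x ∂μ, x ∈ S → IsApproxLineLipschitzWithinAt f S x e) :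
    ∀ᵐ x ∂μ, x ∈ K → ∃ k N : ℕ, x ∈ lineRefinement f K e k (1 / ((N : ℝ) + 1)) := by
  filter_upwards [hS, ae_hasDensityAt_line_compl_zero μ hK e] with x hxS hx hxK
  obtain ⟨C, hC⟩ := hxS (hKS hxK)
  obtain ⟨k, hk⟩ := exists_nat_ge C
  have density_badTimes : HasDensityAt volume (badTimes f K e k x) 0 0 := by
    refine ((hx hxK).zero_union hC).zero_mono fun t ht => ?_
    by_cases htK : x + t • e ∈ K
    · exact .inr ⟨hKS htK, lt_of_le_of_lt (by gcongr) (ht htK)⟩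
    · exact .inl htK
  obtain ⟨δ, hδ, hsparse⟩ :=
    hasDensityAt_zero_iff_isSparseAt.1 density_badTimes (1 / 8) (by positivity)
  obtain ⟨N, hN⟩ := exists_nat_one_div_lt hδ
  exact ⟨k, N, hxK, hsparse.mono le_rfl hN.le⟩

variable [MeasurableSpace F] [BorelSpace F] [SecondCountableTopology F]

/-- The directions in `D` are added to `V` one at a time, each time splitting `K` into countably
many refinements. -/
lemma LipschitzAlong.ae_of_forall_sup_span {D : Set X} (hD : D.Finite) {Q : X → Prop}
    (hf : Measurable fun x : S => f x)
    (hS : ∀ e ∈ D, ∀ᵐ x ∂μ, x ∈ S → IsApproxLineLipschitzWithinAt f S x e)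
    {V : Submodule ℝ X}
    (hQ : ∀ K ⊆ S, MeasurableSet K → LipschitzAlong (V ⊔ Submodule.span ℝ D) f K →
      ∀ᵐ x ∂μ, x ∈ K → Q x)
    (hKS : K ⊆ S) (hK : MeasurableSet K) (hV : LipschitzAlong V f K) :
    ∀ᵐ x ∂μ, x ∈ K → Q x := by
  induction D, hD using Set.Finite.induction_on generalizing V K with
  | empty => exact hQ K hKS hK (by simpa using hV)
  | @insert e D _ _ ih =>
    have ae_refinement (k N : ℕ) :
        ∀ᵐ x ∂μ, x ∈ lineRefinement f K e k (1 / ((N : ℝ) + 1)) → Q x := by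
      refine ih (fun e' he' => hS e' (mem_insert_of_mem e he')) (fun K' hK'S hK' hlip => ?_)
        ((sep_subset K _).trans hKS)
        (measurableSet_lineRefinement hK (hf.comp (measurable_inclusion hKS)) e k _)
        (hV.sup_span_singleton e k (by positivity))
      rw [sup_assoc, ← Submodule.span_union, singleton_union] at hlip
      exact hQ K' hK'S hK' hlip
    filter_upwards [ae_all_iff.2 fun k => ae_all_iff.2 (ae_refinement k),
      ae_exists_mem_lineRefinement hK hKS (hS e (mem_insert e D))] with x hx hxK hmem
    obtain ⟨k, N, hkN⟩ := hxK hmem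
    exact hx k N hkN

end Refinement

section AlmostEverywhere

variable {X F ι : Type*} [NormedAddCommGroup X] [NormedSpace ℝ X] [FiniteDimensional ℝ X]
  [MeasurableSpace X] [BorelSpace X] {μ : Measure X} [μ.IsAddHaarMeasure]
  [NormedAddCommGroup F] [NormedSpace ℝ F] [FiniteDimensional ℝ F] [Finite ι] {f : X → F}
  {K : Set X}

lemma ae_exists_hasApproxFDerivWithinAt_of_lipschitzOnWith {C : ℝ≥0} (hf : LipschitzOnWith C f K)
    (hK : MeasurableSet K) (S : Set X) (e : ι → X) :
    ∀ᵐ x ∂μ, x ∈ K → ∃ L : X →L[ℝ] F, HasApproxFDerivWithinAt μ f L S x ∧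
      ∀ i, HasApproxLineDerivWithinAt f (L (e i)) S x (e i) := by
  filter_upwards [hf.ae_differentiableWithinAt_of_mem, ae_hasDensityAt_compl_zero μ hK,
    ae_all_iff.2 fun i => ae_hasDensityAt_line_compl_zero μ hK (e i)] with x hdiff hdens hline hxK
  have hL := (hdiff hxK).hasFDerivWithinAt
  exact ⟨_, hasApproxFDerivWithinAt_of_hasFDerivWithinAt hL (hdens hxK) S,
    fun i => hasApproxLineDerivWithinAt_of_hasFDerivWithinAt hL (hline i hxK) S⟩

lemma LipschitzAlong.ae_exists_hasApproxFDerivWithinAt (hf : LipschitzAlong ⊤ f K)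
    (hK : MeasurableSet K) (S : Set X) (e : ι → X) :
    ∀ᵐ x ∂μ, x ∈ K → ∃ L : X →L[ℝ] F, HasApproxFDerivWithinAt μ f L S x ∧
      ∀ i, HasApproxLineDerivWithinAt f (L (e i)) S x (e i) := by
  obtain ⟨C, δ, hδ, hlip⟩ := hf.exists_lipschitzOnWith_ball
  refine measure_null_of_locally_null _ fun x _ =>
    ⟨_, inter_mem_nhdsWithin _ (ball_mem_nhds x hδ), measure_mono_null ?_
      (ae_exists_hasApproxFDerivWithinAt_of_lipschitzOnWith (hlip x)
        (hK.inter measurableSet_ball) S e)⟩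
  rintro y ⟨hy, hyx⟩ hyK
  exact hy fun h => hyK ⟨h, hyx⟩

theorem approx_differentiable_of_approx_partials_general [MeasurableSpace F] [BorelSpace F]
    {S : Set X} (hS : MeasurableSet S) (hf : Measurable fun x : S => f x) {e : ι → X}
    (he : Submodule.span ℝ (range e) = ⊤)
    (hlip : ∀ i, ∀ᵐ x ∂μ, x ∈ S → IsApproxLineLipschitzWithinAt f S x (e i)) :
    ∀ᵐ x ∂μ, x ∈ S → ∃ L : X →L[ℝ] F, HasApproxFDerivWithinAt μ f L S x ∧
      ∀ i, HasApproxLineDerivWithinAt f (L (e i)) S x (e i) := by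
  refine (lipschitzAlong_bot f S).ae_of_forall_sup_span (finite_range e) hf
    (forall_mem_range.2 hlip) (fun K _ hK hKlip => ?_) subset_rfl hS
  rw [he, bot_sup_eq] at hKlip
  exact hKlip.ae_exists_hasApproxFDerivWithinAt hK S e

end AlmostEverywhere

lemma span_range_euclideanSpace_single (𝕜 ι : Type*) [RCLike 𝕜] [Finite ι] [DecidableEq ι] :
    Submodule.span 𝕜 (range fun i : ι => EuclideanSpace.single i (1 : 𝕜)) = ⊤ := by
  have := Fintype.ofFinite ι
  simpa [← EuclideanSpace.basisFun_apply] using (EuclideanSpace.basisFun ι 𝕜).toBasis.span_eq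

lemma hasApproxPartialDerivAt_iff_hasApproxLineDerivWithinAt {n m : ℕ}
    {E : Set (EuclideanSpace ℝ (Fin n))} {f : EuclideanSpace ℝ (Fin n) → EuclideanSpace ℝ (Fin m)}
    {j : Fin n} {x : EuclideanSpace ℝ (Fin n)} {v : EuclideanSpace ℝ (Fin m)} :
    HasApproxPartialDerivAt E f j x v ↔
      HasApproxLineDerivWithinAt f v E x (EuclideanSpace.single j (1 : ℝ)) :=
  hasApproxLineDerivWithinAt_iff.symm

/-- A measurable mapping having approximate partial derivatives along each coordinate
direction almost everywhere is approximately differentiable almost everywhere, and the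
approximate differential acts on the coordinate vectors as the corresponding approximate
partial derivatives. -/
theorem approx_differentiable_of_approx_partials {n m : ℕ}
    (E : Set (EuclideanSpace ℝ (Fin n))) (hE : MeasurableSet E)
    (f : EuclideanSpace ℝ (Fin n) → EuclideanSpace ℝ (Fin m))
    (hf : Measurable (fun x : E => f x))
    (hpartial : ∀ j : Fin n, ∀ᵐ x ∂volume, x ∈ E →
      ∃ v : EuclideanSpace ℝ (Fin m), HasApproxPartialDerivAt E f j x v) :
    ∀ᵐ x ∂volume, x ∈ E →
      ∃ L : EuclideanSpace ℝ (Fin n) →ₗ[ℝ] EuclideanSpace ℝ (Fin m),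
        IsApproxDifferential E f x L ∧
        ∀ j : Fin n, HasApproxPartialDerivAt E f j x (L (EuclideanSpace.single j (1 : ℝ))) := by
  simp only [hasApproxPartialDerivAt_iff_hasApproxLineDerivWithinAt] at hpartial ⊢
  filter_upwards [approx_differentiable_of_approx_partials_general hE hf
    (span_range_euclideanSpace_single ℝ (Fin n)) fun j => (hpartial j).mono fun x hx hxE =>
      (hx hxE).elim fun _ hv => hv.isApproxLineLipschitzWithinAt] with x hx hxE
  obtain ⟨L, hL, hLe⟩ := hx hxE
  exact ⟨L, hL, hLe⟩
end

section
/- Let E ⊆ ℝ^n be a Lebesgue-measurable set, f : E → ℝ^m a measurable mapping, and fix j ∈ {1, …, n}. Then: (a) the set A_j = {x ∈ E : ap limsup_{t→0} |f(x + t e_j) − f(x)|/|t| < ∞} is Lebesgue measurable; (b) f has an approximate partial derivative ap ∂_j f(x) along e_j at almost every point x ∈ A_j; and (c) the mapping x ↦ ap ∂_j f(x) is measurable on its domain of definition. -/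
open MeasureTheory Metric Filter Set Function
open scoped Topology ENNReal NNReal

/-- The set `A_j` of points of `E` where the approximate upper limit of the difference
quotient of `f` along the `j`-th coordinate direction is finite. -/
def finiteApDilatationSet {n m : ℕ} (E : Set (EuclideanSpace ℝ (Fin n)))
    (f : EuclideanSpace ℝ (Fin n) → EuclideanSpace ℝ (Fin m)) (j : Fin n) :
    Set (EuclideanSpace ℝ (Fin n)) :=
  {x ∈ E | ∃ s : ℝ, HasDensityAt (volume : Measure ℝ)
    {t : ℝ | x + t • EuclideanSpace.single j (1 : ℝ) ∈ E ∧
      s < ‖f (x + t • EuclideanSpace.single j (1 : ℝ)) - f x‖ / |t|} 0 0}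

/-- The domain of definition of the approximate partial derivative `ap ∂_j f`. -/
def apPartialDerivDomain {n m : ℕ} (E : Set (EuclideanSpace ℝ (Fin n)))
    (f : EuclideanSpace ℝ (Fin n) → EuclideanSpace ℝ (Fin m)) (j : Fin n) :
    Set (EuclideanSpace ℝ (Fin n)) :=
  {x | ∃ v : EuclideanSpace ℝ (Fin m), HasApproxPartialDerivAt E f j x v}

/-!
The sets whose complement has density zero at a point form a filter, so approximate limits are
limits along this *density filter* and a finite approximate upper limit is boundedness along it.
Whether a ball of centre `x` and radius `r` is filled by a set up to a given proportion is
measurable in `x` by Fubini, and rational radii suffice; hence the density filter depends measurably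
on the point, and the existence and the value of limits along a measurably varying filter are
measurable. This gives (a) and (c).

For (b), let `F` be a measurable function of one real variable. If its difference quotients are
bounded by `k` on most of every short interval around both `x` and `y`, then some `z` between `x`
and `y` is good for both, and `‖F y - F x‖ ≤ k * |y - x|`. So the points where the approximate
upper limit is finite are covered by countably many measurable sets on which `F` is Lipschitz.
Rademacher's theorem differentiates `F` along such a set, and at its density points this derivative
is an approximate one. Fubini over the lines parallel to the given direction concludes.
-/

lemma tendsto_div_nhdsGT_zero_iff {a b : ℝ → ℝ≥0∞} :
    Tendsto (fun r => a r / b r) (𝓝[>] 0) (𝓝 0) ↔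
      ∀ k : ℕ, ∃ N : ℕ, ∀ r ∈ Ioo (0 : ℝ) (1 / (N + 1)), a r ≤ (k + 1 : ℝ≥0∞)⁻¹ * b r := by
  have hradii : (𝓝[>] (0 : ℝ)).HasBasis (fun _ : ℕ => True) fun N => Ioo 0 (1 / (N + 1)) :=
    (nhdsGT_basis 0).to_hasBasis
      (fun R hR => (exists_nat_one_div_lt hR).imp fun N hN => ⟨trivial, Ioo_subset_Ioo_right hN.le⟩)
      fun N _ => ⟨1 / (N + 1), Nat.one_div_pos_of_nat, subset_rfl⟩
  have hbounds : (𝓝 (0 : ℝ≥0∞)).HasBasis (fun _ : ℕ => True) fun k => Iic (k + 1 : ℝ≥0∞)⁻¹ := by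
    refine ENNReal.nhds_zero_basis_Iic.to_hasBasis (fun c hc => ?_)
      fun k _ => ⟨(k + 1 : ℝ≥0∞)⁻¹, by simp, subset_rfl⟩
    obtain ⟨k, hk⟩ := ENNReal.exists_inv_nat_lt hc.ne'
    exact ⟨k, trivial, Iic_subset_Iic.2 ((ENNReal.inv_le_inv.2 le_self_add).trans hk.le)⟩
  have hdiv (k : ℕ) (r : ℝ) : a r / b r ≤ (k + 1 : ℝ≥0∞)⁻¹ ↔ a r ≤ (k + 1 : ℝ≥0∞)⁻¹ * b r :=
    ENNReal.div_le_iff_le_mul (.inr (by simp)) (.inr (by simp))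
  simp only [hradii.tendsto_iff hbounds, mem_Iic, hdiv, true_and, true_implies]

section DensityFilter

variable {X : Type*} [PseudoMetricSpace X] [MeasurableSpace X] {μ : Measure X}
  {c : ℝ≥0∞} {r R R' : ℝ} {Y Z : Set X} {x : X}

/-- `Y` fills at most the proportion `c` of every ball centred at `x` of radius less than `R`:
a quantitative form of density zero at `x`. The bound is written as a product, so that it
also makes sense when a ball has measure zero or infinity. -/
def IsThinAt (μ : Measure X) (c : ℝ≥0∞) (R : ℝ) (Y : Set X) (x : X) : Prop :=
  ∀ r ∈ Ioo 0 R, μ (Y ∩ ball x r) ≤ c * μ (ball x r)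

lemma IsThinAt.mono (hZ : IsThinAt μ c R Z x) (hYZ : Y ⊆ Z) (hR : R' ≤ R) :
    IsThinAt μ c R' Y x := fun _ hr =>
  (measure_mono (inter_subset_inter_left _ hYZ)).trans (hZ _ ⟨hr.1, hr.2.trans_le hR⟩)

/-- An open ball is the increasing union of the smaller ones, so a proportion bound on sets squeezed
between the smaller balls and the ball itself survives in the limit. -/
lemma measure_inter_ball_le_of_forall_exists_between (hr : 0 < r)
    (h : ∀ q ∈ Ioo 0 r, ∃ B, ball x q ⊆ B ∧ B ⊆ ball x r ∧ μ (Y ∩ B) ≤ c * μ B) :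
    μ (Y ∩ ball x r) ≤ c * μ (ball x r) := by
  obtain ⟨q, hq_mono, hq_mem, hq_lim⟩ := exists_seq_strictMono_tendsto' hr
  have hball : ball x r = ⋃ n, ball x (q n) := by
    refine (iUnion_subset fun n => ball_subset_ball (hq_mem n).2.le).antisymm' fun y hy => ?_
    exact mem_iUnion.2 (hq_lim.eventually_const_lt (mem_ball.1 hy)).exists
  have hmono : Monotone fun n => Y ∩ ball x (q n) := fun _ _ hmn =>
    inter_subset_inter_right _ (ball_subset_ball (hq_mono.monotone hmn))
  calc μ (Y ∩ ball x r) = ⨆ n, μ (Y ∩ ball x (q n)) := by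
        rw [hball, inter_iUnion, hmono.measure_iUnion]
    _ ≤ c * μ (ball x r) := iSup_le fun n => by
        obtain ⟨B, hqB, hBr, hB⟩ := h (q n) (hq_mem n)
        calc μ (Y ∩ ball x (q n)) ≤ μ (Y ∩ B) := by gcongr
          _ ≤ c * μ B := hB
          _ ≤ c * μ (ball x r) := by gcongr

lemma isThinAt_iff_forall_rat :
    IsThinAt μ c R Y x ↔ ∀ q : ℚ, (q : ℝ) ∈ Ioo 0 R → μ (Y ∩ ball x q) ≤ c * μ (ball x q) := by
  refine ⟨fun h q => h q, fun h r hr => ?_⟩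
  refine measure_inter_ball_le_of_forall_exists_between hr.1 fun q hq => ?_
  obtain ⟨p, hqp, hpr⟩ := exists_rat_btwn hq.2
  exact ⟨ball x p, ball_subset_ball hqp.le, ball_subset_ball hpr.le,
    h p ⟨hq.1.trans hqp, hpr.trans hr.2⟩⟩

lemma isThinAt_of_forall_closedBall
    (h : ∀ r ∈ Ioo 0 R, μ (Y ∩ closedBall x r) ≤ c * μ (closedBall x r)) : IsThinAt μ c R Y x :=
  fun _ hr => measure_inter_ball_le_of_forall_exists_between hr.1 fun q hq =>
    ⟨closedBall x q, ball_subset_closedBall, closedBall_subset_ball hq.2,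
      h q ⟨hq.1, hq.2.trans hr.2⟩⟩

lemma hasDensityAt_zero_iff_forall_isThinAt :
    HasDensityAt μ Y x 0 ↔ ∀ k : ℕ, ∃ N : ℕ, IsThinAt μ (k + 1 : ℝ≥0∞)⁻¹ (1 / (N + 1)) Y x :=
  tendsto_div_nhdsGT_zero_iff

/-- The neighbourhoods of `x` in the sense of density: the sets whose complement has density zero
at `x`. Limits along this filter are approximate limits. -/
def densityFilter (μ : Measure X) (x : X) : Filter X where
  sets := {Y | HasDensityAt μ Yᶜ x 0}
  univ_sets := by simp [HasDensityAt]
  sets_of_superset {Y Z} hY hYZ := by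
    refine tendsto_of_tendsto_of_tendsto_of_le_of_le tendsto_const_nhds hY
      (fun _ => zero_le) fun r => ?_
    gcongr
  inter_sets {Y Z} hY hZ := by
    have hsum := Tendsto.add hY hZ
    rw [add_zero] at hsum
    refine tendsto_of_tendsto_of_tendsto_of_le_of_le tendsto_const_nhds hsum
      (fun _ => zero_le) fun r => ?_
    rw [compl_inter, union_inter_distrib_right, ← ENNReal.add_div]
    gcongr
    exact measure_union_le _ _

lemma mem_densityFilter : Y ∈ densityFilter μ x ↔ HasDensityAt μ Yᶜ x 0 := Iff.rfl

lemma eventually_densityFilter {p : X → Prop} :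
    (∀ᶠ y in densityFilter μ x, p y) ↔ HasDensityAt μ {y | ¬p y} x 0 := Iff.rfl

lemma densityFilter_le_nhds : densityFilter μ x ≤ 𝓝 x := by
  refine nhds_basis_ball.ge_iff.2 fun R hR => ?_
  rw [mem_densityFilter, HasDensityAt]
  refine tendsto_const_nhds.congr' ?_
  filter_upwards [Ioo_mem_nhdsGT hR] with r hr
  have hempty : (ball x R)ᶜ ∩ ball x r = ∅ :=
    (disjoint_compl_left.mono_right (ball_subset_ball hr.2.le)).inter_eq
  rw [hempty, measure_empty, ENNReal.zero_div]

lemma densityFilter_le_ae : densityFilter μ x ≤ ae μ := fun Y hY => by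
  have hzero (r : ℝ) : μ (Yᶜ ∩ ball x r) = 0 :=
    measure_mono_null inter_subset_left (mem_ae_iff.1 hY)
  simp [mem_densityFilter, HasDensityAt, hzero]

lemma densityFilter_le_nhdsNE [NullSingletonClass μ] : densityFilter μ x ≤ 𝓝[≠] x :=
  le_inf densityFilter_le_nhds (le_principal_iff.2 (densityFilter_le_ae (Measure.ae_ne μ x)))

end DensityFilter

theorem ae_mem_densityFilter {X : Type*} [MetricSpace X] [SecondCountableTopology X]
    [HasBesicovitchCovering X] [MeasurableSpace X] [BorelSpace X] (μ : Measure X)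
    [IsLocallyFiniteMeasure μ] {Y : Set X} (hY : MeasurableSet Y) :
    ∀ᵐ x ∂μ, x ∈ Y → Y ∈ densityFilter μ x := by
  filter_upwards [Besicovitch.ae_tendsto_measure_inter_div_of_measurableSet μ hY.compl]
    with x hx hxY
  rw [indicator_of_notMem (notMem_compl_iff.2 hxY), tendsto_div_nhdsGT_zero_iff] at hx
  rw [mem_densityFilter, hasDensityAt_zero_iff_forall_isThinAt]
  exact fun k => (hx k).imp fun N => isThinAt_of_forall_closedBall

section Translation

variable {G : Type*} [SeminormedAddCommGroup G] [MeasurableSpace G] [MeasurableAdd G]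
  {μ : Measure G} [μ.IsAddLeftInvariant]

lemma hasDensityAt_preimage_add_left_iff (Y : Set G) (a x : G) (d : ℝ≥0∞) :
    HasDensityAt μ ((a + ·) ⁻¹' Y) x d ↔ HasDensityAt μ Y (a + x) d := by
  have hball (r : ℝ) : (a + ·) ⁻¹' ball (a + x) r = ball x r := by
    ext t
    simp only [mem_preimage, mem_ball, dist_add_left]
  simp only [HasDensityAt, ← hball, ← preimage_inter, measure_preimage_add]

lemma map_add_left_densityFilter (a x : G) :
    map (a + ·) (densityFilter μ x) = densityFilter μ (a + x) :=
  Filter.ext fun Y => hasDensityAt_preimage_add_left_iff Yᶜ a x 0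

end Translation

/-- Measurable dependence of a filter on a parameter: for every measurable relation between
parameters and points, the parameters whose section is eventually satisfied form a measurable
set. -/
def MeasurableFilterFamily {X T : Type*} [MeasurableSpace X] [MeasurableSpace T]
    (L : X → Filter T) : Prop :=
  ∀ ⦃P : Set (X × T)⦄, MeasurableSet P → MeasurableSet {x | ∀ᶠ t in L x, (x, t) ∈ P}

section MeasurableIsThinAt

variable {X T : Type*} [MeasurableSpace X] [PseudoMetricSpace T] [SecondCountableTopology T]
  [MeasurableSpace T] [OpensMeasurableSpace T] {φ : X → T} {P : Set (X × T)}

lemma measurableSet_isThinAt (μ : Measure T) [SFinite μ] (hφ : Measurable φ)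
    (hP : MeasurableSet P) (c : ℝ≥0∞) (R : ℝ) :
    MeasurableSet {x | IsThinAt μ c R {t | (x, t) ∈ P} (φ x)} := by
  have hball (q : ℝ) : MeasurableSet {p : X × T | p.2 ∈ ball (φ p.1) q} :=
    measurableSet_lt (measurable_snd.dist (hφ.comp measurable_fst)) measurable_const
  simp only [isThinAt_iff_forall_rat, ofPred_forall]
  exact .iInter fun q => .iInter fun _ => measurableSet_le
    (measurable_measure_prodMk_left (hP.inter (hball q)))
    ((measurable_measure_prodMk_left (hball q)).const_mul c)

theorem measurableFilterFamily_densityFilter (μ : Measure T) [SFinite μ] (hφ : Measurable φ) :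
    MeasurableFilterFamily fun x => densityFilter μ (φ x) := fun P hP => by
  simp only [eventually_densityFilter, hasDensityAt_zero_iff_forall_isThinAt, ofPred_forall,
    ofPred_exists]
  exact .iInter fun k => .iUnion fun N => measurableSet_isThinAt μ hφ hP.compl _ _

end MeasurableIsThinAt

lemma exists_tendsto_iff_forall_exists_eventually_dist_lt {T V ι : Type*} [PseudoMetricSpace V]
    [CompleteSpace V] [Nonempty V] {d : ι → V} (hd : DenseRange d) {L : Filter T} {u : T → V} :
    (∃ v, Tendsto u L (𝓝 v)) ↔ ∀ k : ℕ, ∃ i, ∀ᶠ t in L, dist (u t) (d i) < 1 / (k + 1) := by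
  constructor
  · rintro ⟨v, hv⟩ k
    obtain ⟨i, hi⟩ := hd.exists_dist_lt v (Nat.one_div_pos_of_nat (n := k))
    exact ⟨i, (hv.dist tendsto_const_nhds).eventually_lt_const hi⟩
  · intro h
    rcases L.eq_or_neBot with rfl | hL
    · exact ⟨Classical.arbitrary V, tendsto_bot⟩
    refine cauchy_map_iff_exists_tendsto.1 (Metric.cauchy_iff.2 ⟨hL.map u, fun ε hε => ?_⟩)
    obtain ⟨k, hk⟩ := exists_nat_one_div_lt (half_pos hε)
    obtain ⟨i, hi⟩ := h k
    refine ⟨ball (d i) (1 / (k + 1)), hi, fun y hy z hz => ?_⟩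
    calc dist y z ≤ dist y (d i) + dist z (d i) := dist_triangle_right _ _ _
      _ < 1 / (k + 1) + 1 / (k + 1) := add_lt_add hy hz
      _ < ε := by linarith

lemma mem_iff_forall_eventually_infEDist_lt {T V : Type*} [PseudoEMetricSpace V] {C : Set V}
    (hC : IsClosed C) {L : Filter T} [NeBot L] {u : T → V} {v : V} (hu : Tendsto u L (𝓝 v)) :
    v ∈ C ↔ ∀ k : ℕ, ∀ᶠ t in L, infEDist (u t) C < (k : ℝ≥0∞)⁻¹ := by
  have hdist : Tendsto (fun t => infEDist (u t) C) L (𝓝 (infEDist v C)) :=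
    continuous_infEDist.continuousAt.tendsto.comp hu
  rw [mem_iff_infEDist_zero_of_closed hC]
  refine ⟨fun hzero k => hdist.eventually_lt_const (by simp [hzero]), fun hsmall => ?_⟩
  refine le_zero_iff.1 (ge_of_tendsto' ENNReal.tendsto_inv_nat_nhds_zero fun k => ?_)
  exact le_of_tendsto hdist ((hsmall k).mono fun _ => le_of_lt)

namespace MeasurableFilterFamily

variable {X T V : Type*} [MeasurableSpace X] [MeasurableSpace T] [MeasurableSpace V]
  {L : X → Filter T}

lemma inf_principal (hL : MeasurableFilterFamily L) {S : Set (X × T)} (hS : MeasurableSet S) :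
    MeasurableFilterFamily fun x => L x ⊓ 𝓟 {t | (x, t) ∈ S} := fun P hP => by
  simp only [eventually_inf_principal]
  exact hL (P := {p | p ∈ S → p ∈ P}) (hS.imp hP)

lemma measurableSet_eq_bot (hL : MeasurableFilterFamily L) : MeasurableSet {x | L x = ⊥} := by
  simp only [← eventually_false_iff_eq_bot]
  exact hL MeasurableSet.empty

lemma measurableSet_isBoundedUnder_le (hL : MeasurableFilterFamily L) {u : X → T → ℝ}
    (hu : Measurable (uncurry u)) : MeasurableSet {x | IsBoundedUnder (· ≤ ·) (L x) (u x)} := by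
  have hnat (x : X) : IsBoundedUnder (· ≤ ·) (L x) (u x) ↔ ∃ k : ℕ, ∀ᶠ t in L x, u x t ≤ k := by
    refine ⟨fun ⟨K, hK⟩ => ?_, fun ⟨k, hk⟩ => ⟨k, hk⟩⟩
    obtain ⟨k, hKk⟩ := exists_nat_ge K
    exact ⟨k, (eventually_map.1 hK).mono fun _ ht => ht.trans hKk⟩
  simp only [hnat, ofPred_exists]
  exact .iUnion fun k => hL (measurableSet_le hu measurable_const)

theorem measurableSet_exists_tendsto [PseudoMetricSpace V] [CompleteSpace V]
    [SecondCountableTopology V] [OpensMeasurableSpace V] (hL : MeasurableFilterFamily L)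
    {u : X → T → V} (hu : Measurable (uncurry u)) :
    MeasurableSet {x | ∃ v, Tendsto (u x) (L x) (𝓝 v)} := by
  rcases isEmpty_or_nonempty V with hV | hV
  · simp
  simp only [exists_tendsto_iff_forall_exists_eventually_dist_lt
    (TopologicalSpace.denseRange_denseSeq V), ofPred_forall, ofPred_exists]
  exact .iInter fun k => .iUnion fun i => hL (measurableSet_lt (hu.dist measurable_const)
    measurable_const)

/-- Where `L x = ⊥` every point is a limit, and `limUnder` takes the same value `lim ⊥` for all
such `x`. -/
theorem measurable_limUnder [PseudoEMetricSpace V] [BorelSpace V] [Nonempty V]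
    (hL : MeasurableFilterFamily L) {u : X → T → V} (hu : Measurable (uncurry u))
    (hlim : ∀ x, ∃ v, Tendsto (u x) (L x) (𝓝 v)) :
    Measurable fun x => limUnder (L x) (u x) := by
  refine measurable_of_isClosed fun C hC => ?_
  have hmem (x : X) : limUnder (L x) (u x) ∈ C ↔
      (∀ k : ℕ, ∀ᶠ t in L x, infEDist (u x t) C < (k : ℝ≥0∞)⁻¹) ∧
        (L x = ⊥ → lim (⊥ : Filter V) ∈ C) := by
    rcases (L x).eq_or_neBot with hbot | hne
    · simp [hbot, limUnder]
    · simp [mem_iff_forall_eventually_infEDist_lt hC (tendsto_nhds_limUnder (hlim x)), hne.ne]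
  have hclose : MeasurableSet {x | ∀ k : ℕ, ∀ᶠ t in L x, infEDist (u x t) C < (k : ℝ≥0∞)⁻¹} := by
    simp only [ofPred_forall]
    exact .iInter fun k => hL (measurableSet_lt (measurable_infEDist.comp hu) measurable_const)
  simp only [preimage, hmem]
  exact hclose.inter (hL.measurableSet_eq_bot.imp (.const _))

end MeasurableFilterFamily

section RealLine

lemma exists_mem_Ioo_notMem_of_isThinAt {c : ℝ≥0∞} (hc : 4 * c < 1) {Y Z : Set ℝ} {x y R : ℝ}
    (hxy : x < y) (hR : y - x < R) (hY : IsThinAt volume c R Y x) (hZ : IsThinAt volume c R Z y) :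
    ∃ z ∈ Ioo x y, z ∉ Y ∧ z ∉ Z := by
  by_contra! hcover
  set d := y - x
  have hd : d ∈ Ioo 0 R := ⟨sub_pos.2 hxy, hR⟩
  have hsub : Ioo x y ⊆ Y ∩ ball x d ∪ Z ∩ ball y d := by
    intro z hz
    have hzx : z ∈ ball x d := by
      rw [Real.ball_eq_Ioo]; constructor <;> linarith [hz.1, hz.2]
    have hzy : z ∈ ball y d := by
      rw [Real.ball_eq_Ioo]; constructor <;> linarith [hz.1, hz.2]
    by_cases hzY : z ∈ Y
    · exact .inl ⟨hzY, hzx⟩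
    · exact .inr ⟨hcover z hz hzY, hzy⟩
  have hlt : ENNReal.ofReal d < ENNReal.ofReal d :=
    calc ENNReal.ofReal d = volume (Ioo x y) := Real.volume_Ioo.symm
      _ ≤ volume (Y ∩ ball x d) + volume (Z ∩ ball y d) :=
        (measure_mono hsub).trans (measure_union_le _ _)
      _ ≤ c * volume (ball x d) + c * volume (ball y d) := add_le_add (hY d hd) (hZ d hd)
      _ = 4 * c * ENNReal.ofReal d := by
        rw [Real.volume_ball, Real.volume_ball, ENNReal.ofReal_mul zero_le_two,
          ENNReal.ofReal_ofNat]
        ring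
      _ < 1 * ENNReal.ofReal d :=
        ENNReal.mul_lt_mul_left (by simpa using hd.1) ENNReal.ofReal_ne_top hc
      _ = ENNReal.ofReal d := one_mul _
  exact hlt.false

variable {V : Type*} [NormedAddCommGroup V] [NormedSpace ℝ V] {F : ℝ → V} {k : ℕ} {x y : ℝ}

/-- The points from which the difference quotients of `F` exceed `k` on at most an eighth of every
interval of radius less than `1 / (k + 1)`. One eighth is small enough for the good parts seen from
two nearby points of this set to meet between them. -/
def gentleSet (F : ℝ → V) (k : ℕ) : Set ℝ :=
  {x | IsThinAt volume 8⁻¹ (1 / (k + 1)) {y | k < ‖slope F x y‖} x}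

lemma measurableSet_gentleSet [MeasurableSpace V] [BorelSpace V] [SecondCountableTopology V]
    (hF : Measurable F) (k : ℕ) : MeasurableSet (gentleSet F k) := by
  have hslope : Measurable fun p : ℝ × ℝ => ‖slope F p.1 p.2‖ := by
    simp only [slope, vsub_eq_sub]
    fun_prop
  exact measurableSet_isThinAt volume measurable_id (measurableSet_lt measurable_const hslope) _ _

lemma norm_sub_le_of_norm_slope_le {K : ℝ} (h : ‖slope F x y‖ ≤ K) :
    ‖F y - F x‖ ≤ K * |y - x| := by
  rw [← vsub_eq_sub, ← sub_smul_slope F x y, norm_smul, Real.norm_eq_abs, mul_comm]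
  gcongr

lemma norm_sub_le_of_mem_gentleSet (hx : x ∈ gentleSet F k) (hy : y ∈ gentleSet F k)
    (hxy : x < y) (hk : y - x < 1 / (k + 1)) : ‖F y - F x‖ ≤ k * (y - x) := by
  have hc : 4 * (8 : ℝ≥0∞)⁻¹ < 1 := by
    rw [← div_eq_mul_inv, ENNReal.div_lt_iff] <;> norm_num
  obtain ⟨z, ⟨hxz, hzy⟩, hzx_slope, hzy_slope⟩ :=
    exists_mem_Ioo_notMem_of_isThinAt hc hxy hk hx hy
  have hFx : ‖F z - F x‖ ≤ k * |z - x| := norm_sub_le_of_norm_slope_le (not_lt.1 hzx_slope)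
  have hFy : ‖F z - F y‖ ≤ k * |z - y| := norm_sub_le_of_norm_slope_le (not_lt.1 hzy_slope)
  rw [abs_of_pos (sub_pos.2 hxz)] at hFx
  rw [abs_of_neg (sub_neg.2 hzy), norm_sub_rev] at hFy
  calc ‖F y - F x‖ ≤ ‖F y - F z‖ + ‖F z - F x‖ := norm_sub_le_norm_sub_add_norm_sub _ _ _
    _ ≤ k * -(z - y) + k * (z - x) := add_le_add hFy hFx
    _ = k * (y - x) := by ring

lemma lipschitzOnWith_gentleSet_inter_ball (F : ℝ → V) (k : ℕ) (a : ℝ) :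
    LipschitzOnWith k F (gentleSet F k ∩ ball a (1 / (k + 1) / 2)) := by
  refine LipschitzOnWith.of_dist_le_mul fun x hx y hy => ?_
  wlog hxy : x < y generalizing x y
  · rcases (not_lt.1 hxy).eq_or_lt with rfl | hyx
    · simp
    · simpa only [dist_comm] using this y hy x hx hyx
  have hdist : dist y x < 1 / (k + 1) := by
    linarith [dist_triangle_right y x a, mem_ball.1 hx.2, mem_ball.1 hy.2]
  rw [Real.dist_eq, abs_of_pos (sub_pos.2 hxy)] at hdist
  rw [dist_comm, dist_comm x, dist_eq_norm, Real.dist_eq, abs_of_pos (sub_pos.2 hxy)]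
  exact norm_sub_le_of_mem_gentleSet hx.1 hy.1 hxy hdist

lemma exists_mem_gentleSet
    (h : IsBoundedUnder (· ≤ ·) (densityFilter volume x) fun y => ‖slope F x y‖) :
    ∃ k, x ∈ gentleSet F k := by
  obtain ⟨K, hK⟩ := h
  have hdens : HasDensityAt volume {y | ¬‖slope F x y‖ ≤ K} x 0 :=
    eventually_densityFilter.1 (eventually_map.1 hK)
  have heighth : ((7 : ℕ) + 1 : ℝ≥0∞)⁻¹ = 8⁻¹ := by norm_num
  obtain ⟨N, hN⟩ := hasDensityAt_zero_iff_forall_isThinAt.1 hdens 7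
  rw [heighth] at hN
  obtain ⟨M, hM⟩ := exists_nat_ge K
  refine ⟨max M N, hN.mono (fun y hy => not_le.2 (lt_of_le_of_lt ?_ hy)) ?_⟩
  · exact hM.trans (Nat.cast_le.2 (le_max_left M N))
  · exact Nat.one_div_le_one_div (le_max_right M N)

theorem ae_exists_tendsto_slope_densityFilter [FiniteDimensional ℝ V] [MeasurableSpace V]
    [BorelSpace V] (hF : Measurable F) :
    ∀ᵐ x, IsBoundedUnder (· ≤ ·) (densityFilter volume x) (fun y => ‖slope F x y‖) →
      ∃ v, Tendsto (slope F x) (densityFilter volume x) (𝓝 v) := by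
  have := FiniteDimensional.proper_real V
  let piece (k : ℕ) (a : ℚ) : Set ℝ := gentleSet F k ∩ ball (a : ℝ) (1 / (k + 1) / 2)
  have hpiece (k : ℕ) (a : ℚ) : MeasurableSet (piece k a) :=
    (measurableSet_gentleSet hF k).inter measurableSet_ball
  have hdiff : ∀ᵐ x, ∀ k a, x ∈ piece k a → DifferentiableWithinAt ℝ F (piece k a) x :=
    ae_all_iff.2 fun k => ae_all_iff.2 fun a =>
      (lipschitzOnWith_gentleSet_inter_ball F k a).ae_differentiableWithinAt_of_mem
  have hdens : ∀ᵐ x, ∀ k a, x ∈ piece k a → piece k a ∈ densityFilter volume x :=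
    ae_all_iff.2 fun k => ae_all_iff.2 fun a => ae_mem_densityFilter volume (hpiece k a)
  filter_upwards [hdiff, hdens] with x hx_diff hx_dens hbdd
  obtain ⟨k, hk⟩ := exists_mem_gentleSet hbdd
  obtain ⟨a, ha⟩ := Rat.denseRange_cast.exists_dist_lt x
    (half_pos (Nat.one_div_pos_of_nat (α := ℝ) (n := k)))
  have hx : x ∈ piece k a := ⟨hk, ha⟩
  refine ⟨derivWithin F (piece k a) x, (hasDerivWithinAt_iff_tendsto_slope.1
    (hx_diff k a hx).hasDerivWithinAt).mono_left ?_⟩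
  rw [sdiff_eq, inter_comm, nhdsWithin_inter']
  exact le_inf densityFilter_le_nhdsNE (le_principal_iff.2 (hx_dens k a hx))

theorem ae_exists_tendsto_slope_densityFilter_inf_principal [FiniteDimensional ℝ V]
    [MeasurableSpace V] [BorelSpace V] {S : Set ℝ} (hS : MeasurableSet S) (hF : Measurable F) :
    ∀ᵐ x, x ∈ S →
      IsBoundedUnder (· ≤ ·) (densityFilter volume x ⊓ 𝓟 S) (fun y => ‖slope F x y‖) →
      ∃ v, Tendsto (slope F x) (densityFilter volume x ⊓ 𝓟 S) (𝓝 v) := by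
  filter_upwards [ae_exists_tendsto_slope_densityFilter hF, ae_mem_densityFilter volume hS]
    with x hx hx_dens hxS
  rwa [inf_eq_left.2 (le_principal_iff.2 (hx_dens hxS))]

end RealLine

section ApproxLineDeriv

variable {X V : Type*} [NormedAddCommGroup X] [NormedSpace ℝ X] [NormedAddCommGroup V]
  [NormedSpace ℝ V] {E : Set X} {f f' : X → V} {e x : X} {v : V}

/-- The filter along which approximate limits of `t ↦ f (x + t • e)` at `t = 0` are taken, for `f`
defined on `E`. It is trivial when `E` has density zero at `x` on the line through `x` in
direction `e`. -/
noncomputable def lineFilter (E : Set X) (e x : X) : Filter ℝ :=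
  densityFilter volume 0 ⊓ 𝓟 {t | x + t • e ∈ E}

/-- The difference quotient of `f` at `x` in direction `e`; its value at `t = 0` is `0`. -/
noncomputable def lineSlope (f : X → V) (e x : X) (t : ℝ) : V :=
  t⁻¹ • (f (x + t • e) - f x)

/-- The points of `E` at which the approximate upper limit of the norm of the difference quotient
of `f` in direction `e` is finite. -/
def boundedLineSlopeSet (E : Set X) (f : X → V) (e : X) : Set X :=
  {x ∈ E | IsBoundedUnder (· ≤ ·) (lineFilter E e x) fun t => ‖lineSlope f e x t‖}

/-- `v` is an approximate derivative of `f`, as a map defined on `E`, at `x` in direction `e`. -/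
def HasApproxLineDerivAt (E : Set X) (f : X → V) (e x : X) (v : V) : Prop :=
  Tendsto (lineSlope f e x) (lineFilter E e x) (𝓝 v)

/-- The points at which `f`, as a map defined on `E`, has an approximate derivative in
direction `e`. Such a point need not belong to `E`. -/
def approxLineDerivDomain (E : Set X) (f : X → V) (e : X) : Set X :=
  {x | ∃ v, HasApproxLineDerivAt E f e x v}

/-- The approximate derivative of `f` at `x` in direction `e`. -/
noncomputable def approxLineDeriv (E : Set X) (f : X → V) (e x : X) : V :=
  limUnder (lineFilter E e x) (lineSlope f e x)

lemma eventually_lineFilter {p : ℝ → Prop} :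
    (∀ᶠ t in lineFilter E e x, p t) ↔
      HasDensityAt volume {t | x + t • e ∈ E ∧ ¬p t} 0 0 := by
  simp only [lineFilter, eventually_inf_principal, eventually_densityFilter, mem_ofPred_eq,
    Classical.not_imp]

lemma lineFilter_le_nhdsNE : lineFilter E e x ≤ 𝓝[≠] 0 :=
  inf_le_left.trans densityFilter_le_nhdsNE

lemma eventually_add_smul_mem_lineFilter : ∀ᶠ t in lineFilter E e x, x + t • e ∈ E :=
  mem_inf_of_right (mem_principal_self _)

lemma norm_lineSlope (t : ℝ) : ‖lineSlope f e x t‖ = ‖f (x + t • e) - f x‖ / |t| := by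
  rw [lineSlope, norm_smul, norm_inv, Real.norm_eq_abs, inv_mul_eq_div]

lemma lineSlope_eventuallyEq (hff' : EqOn f f' E) (hx : x ∈ E) :
    lineSlope f e x =ᶠ[lineFilter E e x] lineSlope f' e x := by
  filter_upwards [eventually_add_smul_mem_lineFilter] with t ht
  rw [lineSlope, lineSlope, hff' ht, hff' hx]

lemma boundedLineSlopeSet_congr (hff' : EqOn f f' E) :
    boundedLineSlopeSet E f e = boundedLineSlopeSet E f' e := by
  ext x
  refine and_congr_right fun hx => ?_
  have hnorm : (‖lineSlope f e x ·‖) =ᶠ[lineFilter E e x] (‖lineSlope f' e x ·‖) :=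
    (lineSlope_eventuallyEq hff' hx).fun_comp norm
  rw [IsBoundedUnder, IsBoundedUnder, map_congr hnorm]

lemma hasApproxLineDerivAt_iff_forall_eventually_norm_le :
    HasApproxLineDerivAt E f e x v ↔
      ∀ ε : ℝ, 0 < ε → ∀ᶠ t in lineFilter E e x, ‖f (x + t • e) - f x - t • v‖ ≤ ε * |t| := by
  rw [HasApproxLineDerivAt, (nhds_basis_closedBall (x := v)).tendsto_right_iff]
  refine forall₂_congr fun ε _ => eventually_congr ?_
  filter_upwards [lineFilter_le_nhdsNE self_mem_nhdsWithin] with t ht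
  have herror : lineSlope f e x t - v = t⁻¹ • (f (x + t • e) - f x - t • v) := by
    rw [lineSlope, smul_sub t⁻¹ (_ - _), inv_smul_smul₀ ht]
  rw [mem_closedBall_iff_norm, herror, norm_smul, norm_inv, Real.norm_eq_abs, inv_mul_eq_div,
    div_le_iff₀ (abs_pos.2 ht)]

lemma hasApproxLineDerivAt_congr (hff' : EqOn f f' E) (hx : x ∈ E) :
    HasApproxLineDerivAt E f e x v ↔ HasApproxLineDerivAt E f' e x v :=
  tendsto_congr' (lineSlope_eventuallyEq hff' hx)

lemma HasApproxLineDerivAt.tendsto_apply (h : HasApproxLineDerivAt E f e x v) :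
    Tendsto (fun t => f (x + t • e)) (lineFilter E e x) (𝓝 (f x)) := by
  have hid : Tendsto (fun t : ℝ => t) (lineFilter E e x) (𝓝 0) :=
    lineFilter_le_nhdsNE.trans nhdsWithin_le_nhds
  have hsum := (hid.smul h).add_const (f x)
  rw [zero_smul, zero_add] at hsum
  refine hsum.congr' ?_
  filter_upwards [lineFilter_le_nhdsNE self_mem_nhdsWithin] with t ht
  rw [lineSlope, smul_inv_smul₀ ht, sub_add_cancel]

lemma hasApproxLineDerivAt_approxLineDeriv (hx : x ∈ approxLineDerivDomain E f e) :
    HasApproxLineDerivAt E f e x (approxLineDeriv E f e x) :=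
  tendsto_nhds_limUnder hx

lemma map_add_left_lineFilter (E : Set X) (e y : X) (s : ℝ) :
    map (s + ·) (lineFilter E e (y + s • e)) =
      densityFilter volume s ⊓ 𝓟 ((fun r : ℝ => y + r • e) ⁻¹' E) := by
  have hset : {t : ℝ | y + s • e + t • e ∈ E} = (s + ·) ⁻¹' ((fun r : ℝ => y + r • e) ⁻¹' E) := by
    ext t
    simp only [mem_ofPred_eq, mem_preimage, add_smul, add_assoc]
  rw [lineFilter, hset, map_inf_principal_preimage, map_add_left_densityFilter, add_zero]

lemma slope_comp_line_comp_add_left (f : X → V) (e y : X) (s : ℝ) :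
    slope (f ∘ fun r : ℝ => y + r • e) s ∘ (s + ·) = lineSlope f e (y + s • e) := by
  ext t
  simp only [comp_apply, slope, lineSlope, vsub_eq_sub, add_sub_cancel_left, add_smul, add_assoc]

section Measurability

variable [MeasurableSpace X] [BorelSpace X] [SecondCountableTopology X]
  [MeasurableSpace V] [BorelSpace V] [SecondCountableTopology V]

lemma measurableFilterFamily_lineFilter {Y : Type*} [MeasurableSpace Y] {φ : Y → X}
    (hφ : Measurable φ) (hE : MeasurableSet E) (e : X) :
    MeasurableFilterFamily fun y => lineFilter E e (φ y) := by
  have hline : Measurable fun p : Y × ℝ => φ p.1 + p.2 • e := by fun_prop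
  exact (measurableFilterFamily_densityFilter volume measurable_const).inf_principal (hline hE)

lemma measurable_uncurry_lineSlope (hf : Measurable f) (e : X) :
    Measurable (uncurry (lineSlope f e)) := by
  unfold lineSlope
  fun_prop

theorem measurableSet_boundedLineSlopeSet (hE : MeasurableSet E) (hf : Measurable f) (e : X) :
    MeasurableSet (boundedLineSlopeSet E f e) :=
  hE.inter ((measurableFilterFamily_lineFilter measurable_id hE e).measurableSet_isBoundedUnder_le
    (measurable_uncurry_lineSlope hf e).norm)

theorem measurableSet_approxLineDerivDomain [CompleteSpace V] (hE : MeasurableSet E)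
    (hf : Measurable f) (e : X) : MeasurableSet (approxLineDerivDomain E f e) :=
  (measurableFilterFamily_lineFilter measurable_id hE e).measurableSet_exists_tendsto
    (measurable_uncurry_lineSlope hf e)

/-- At points of the domain outside `E` the value `f x` is not covered by the measurability
of `f` on `E`; it is recovered as the approximate limit of `f` along the line. -/
theorem measurable_approxLineDeriv (hE : MeasurableSet E) (hf' : Measurable f')
    (hff' : EqOn f f' E) (e : X) :
    Measurable fun x : approxLineDerivDomain E f e => approxLineDeriv E f e x := by
  let L (x : approxLineDerivDomain E f e) : Filter ℝ := lineFilter E e x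
  have hL : MeasurableFilterFamily L :=
    measurableFilterFamily_lineFilter measurable_subtype_coe hE e
  have hline : Measurable fun p : approxLineDerivDomain E f e × ℝ => f' (p.1 + p.2 • e) := by
    fun_prop
  have hf'_lim (x : approxLineDerivDomain E f e) :
      Tendsto (fun t => f' (x + t • e)) (L x) (𝓝 (f x)) := by
    obtain ⟨v, hv⟩ := x.2
    exact hv.tendsto_apply.congr' (eventually_add_smul_mem_lineFilter.mono fun t ht => hff' ht)
  let base (x : approxLineDerivDomain E f e) : V := limUnder (L x) fun t => f' (x + t • e)
  have hbase : Measurable base := hL.measurable_limUnder hline fun x => ⟨f x, hf'_lim x⟩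
  let quotient (x : approxLineDerivDomain E f e) (t : ℝ) : V := t⁻¹ • (f' (x + t • e) - base x)
  have hquotient : Measurable (uncurry quotient) := by
    unfold quotient
    fun_prop
  have hslope (x : approxLineDerivDomain E f e) : lineSlope f e x =ᶠ[L x] quotient x := by
    rcases (L x).eq_or_neBot with hbot | hne
    · rw [hbot]
      exact eventually_bot
    · have hbase_x : base x = f x := (hf'_lim x).limUnder_eq
      filter_upwards [eventually_add_smul_mem_lineFilter] with t ht
      rw [lineSlope, hff' ht, ← hbase_x]
  have hderiv (x : approxLineDerivDomain E f e) :
      approxLineDeriv E f e x = limUnder (L x) (quotient x) := by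
    rw [approxLineDeriv, limUnder, map_congr (hslope x), limUnder]
  simp only [hderiv]
  exact hL.measurable_limUnder hquotient fun x => x.2.imp fun v hv => hv.congr' (hslope x)

end Measurability

section AlmostEverywhere

variable [MeasurableSpace X] [BorelSpace X] [FiniteDimensional ℝ V] [MeasurableSpace V]
  [BorelSpace V]

lemma ae_add_smul_mem_approxLineDerivDomain (hE : MeasurableSet E) (hf : Measurable f) (e y : X) :
    ∀ᵐ s : ℝ, y + s • e ∈ boundedLineSlopeSet E f e → y + s • e ∈ approxLineDerivDomain E f e := by
  have hline : Measurable fun s : ℝ => y + s • e := by fun_prop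
  filter_upwards [ae_exists_tendsto_slope_densityFilter_inf_principal (hline hE) (hf.comp hline)]
    with s hs ⟨hmem, hbdd⟩
  rw [← map_add_left_lineFilter] at hs
  rw [← slope_comp_line_comp_add_left] at hbdd
  obtain ⟨v, hv⟩ := hs hmem (isBoundedUnder_map_iff.2 hbdd)
  refine ⟨v, ?_⟩
  rwa [HasApproxLineDerivAt, ← slope_comp_line_comp_add_left, ← tendsto_map'_iff]

variable [FiniteDimensional ℝ X]

theorem ae_mem_approxLineDerivDomain (μ : Measure X) [μ.IsAddHaarMeasure] (hE : MeasurableSet E)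
    (hf : Measurable f) (e : X) :
    ∀ᵐ x ∂μ, x ∈ boundedLineSlopeSet E f e → x ∈ approxLineDerivDomain E f e := by
  have := FiniteDimensional.proper_real X
  have := FiniteDimensional.proper_real V
  exact ae_mem_of_ae_add_linearMap_mem (LinearMap.toSpanSingleton ℝ X e) volume μ
    ((measurableSet_boundedLineSlopeSet hE hf e).imp (measurableSet_approxLineDerivDomain hE hf e))
    (ae_add_smul_mem_approxLineDerivDomain hE hf e)

theorem measurable_approx_partial_deriv_general (μ : Measure X) [μ.IsAddHaarMeasure]
    (hE : MeasurableSet E) (hf : Measurable fun x : E => f x) (e : X) :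
    MeasurableSet (boundedLineSlopeSet E f e) ∧
    (∀ᵐ x ∂μ, x ∈ boundedLineSlopeSet E f e → ∃ v, HasApproxLineDerivAt E f e x v) ∧
    (∃ g : X → V, (∀ x ∈ approxLineDerivDomain E f e, HasApproxLineDerivAt E f e x (g x)) ∧
      Measurable fun x : approxLineDerivDomain E f e => g x) := by
  have := FiniteDimensional.proper_real X
  have := FiniteDimensional.proper_real V
  obtain ⟨f', hf', hext⟩ :=
    (MeasurableEmbedding.subtype_coe hE).exists_measurable_extend hf fun _ => ⟨0⟩
  have hff' : EqOn f f' E := fun x hx => (congrFun hext ⟨x, hx⟩).symm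
  refine ⟨?_, ?_, approxLineDeriv E f e, fun x => hasApproxLineDerivAt_approxLineDeriv,
    measurable_approxLineDeriv hE hf' hff' e⟩
  · rw [boundedLineSlopeSet_congr hff']
    exact measurableSet_boundedLineSlopeSet hE hf' e
  · rw [boundedLineSlopeSet_congr hff']
    filter_upwards [ae_mem_approxLineDerivDomain μ hE hf' e] with x hx hbdd
    exact (hx hbdd).imp fun v => (hasApproxLineDerivAt_congr hff' hbdd.1).2

end AlmostEverywhere

end ApproxLineDeriv

section CoordinateDirection

variable {n m : ℕ} {E : Set (EuclideanSpace ℝ (Fin n))}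
  {f : EuclideanSpace ℝ (Fin n) → EuclideanSpace ℝ (Fin m)} {j : Fin n}

lemma hasApproxPartialDerivAt_iff {x : EuclideanSpace ℝ (Fin n)} {v : EuclideanSpace ℝ (Fin m)} :
    HasApproxPartialDerivAt E f j x v ↔
      HasApproxLineDerivAt E f (EuclideanSpace.single j 1) x v := by
  simp only [HasApproxPartialDerivAt, hasApproxLineDerivAt_iff_forall_eventually_norm_le,
    eventually_lineFilter, not_le]

lemma finiteApDilatationSet_eq_boundedLineSlopeSet :
    finiteApDilatationSet E f j = boundedLineSlopeSet E f (EuclideanSpace.single j 1) := by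
  ext x
  simp only [finiteApDilatationSet, boundedLineSlopeSet, IsBoundedUnder, IsBounded, eventually_map,
    eventually_lineFilter, norm_lineSlope, not_le]

lemma apPartialDerivDomain_eq_approxLineDerivDomain :
    apPartialDerivDomain E f j = approxLineDerivDomain E f (EuclideanSpace.single j 1) := by
  simp only [apPartialDerivDomain, approxLineDerivDomain, hasApproxPartialDerivAt_iff]

end CoordinateDirection

/-- (a) The set `A_j` is measurable; (b) `f` has an approximate partial derivative along
`e j` at almost every point of `A_j`; (c) the approximate partial derivative is a
measurable mapping on its domain of definition. -/
theorem measurable_approx_partial_deriv {n m : ℕ}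
    (E : Set (EuclideanSpace ℝ (Fin n))) (hE : MeasurableSet E)
    (f : EuclideanSpace ℝ (Fin n) → EuclideanSpace ℝ (Fin m))
    (hf : Measurable (fun x : E => f x)) (j : Fin n) :
    MeasurableSet (finiteApDilatationSet E f j) ∧
    (∀ᵐ x ∂volume, x ∈ finiteApDilatationSet E f j →
      ∃ v : EuclideanSpace ℝ (Fin m), HasApproxPartialDerivAt E f j x v) ∧
    (∃ g : EuclideanSpace ℝ (Fin n) → EuclideanSpace ℝ (Fin m),
      (∀ x ∈ apPartialDerivDomain E f j, HasApproxPartialDerivAt E f j x (g x)) ∧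
      Measurable (fun x : apPartialDerivDomain E f j => g x)) := by
  rw [finiteApDilatationSet_eq_boundedLineSlopeSet, apPartialDerivDomain_eq_approxLineDerivDomain]
  simp only [hasApproxPartialDerivAt_iff]
  exact measurable_approx_partial_deriv_general volume hE hf (EuclideanSpace.single j 1)
end

section
/- Let P ⊆ ℝ^n be a bounded Lebesgue-measurable set and f : P → ℝ^m a measurable mapping that is approximately differentiable at almost every point of P. Then for every ε > 0 there exist a closed set Q ⊆ P with λ(P \ Q) < ε and a C¹-smooth mapping g : ℝ^n → ℝ^m such that g = f on Q. -/
open MeasureTheory Metric Filter Set Function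
open scoped Topology ENNReal NNReal

/-!
At almost every point of `P` the difference quotients of `f` are bounded off a set of density zero.
Where the bound and the scale are uniform, two nearby points share a good intermediate point, so `f`
is Lipschitz there; hence `f` agrees with a Lipschitz map `g` off a set of small measure.

By Rademacher's theorem `g` is almost affine at a uniform scale off a set of small measure.
Mollification with an even kernel fixes affine maps, so mollifying `g` at that scale gives a `C¹`
map `h`, with the Lipschitz constant of `g`, such that `g - h` has a tiny Lipschitz constant on the
good set. Extending `g - h` and iterating with geometrically decreasing constants writes `g` as a
`C¹`-convergent series of `C¹` maps off a set of small measure, which replaces Whitney's extension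
theorem.
-/

open scoped Convolution

section MeasureTheoreticPreliminaries

variable {α : Type*} [MeasurableSpace α] {μ : Measure α}

theorem exists_measure_diff_lt_of_ae_mem_monotone {S : ℕ → Set α} (hS : Monotone S) {K : Set α}
    (hK : μ K ≠ ∞) (hcover : ∀ᵐ x ∂μ, x ∈ K → ∃ j, x ∈ S j) {ε : ℝ≥0∞} (hε : ε ≠ 0) :
    ∃ j, ∀ T, NullMeasurableSet T μ → K ∩ S j ⊆ T → μ (K \ T) < ε := by
  have hKS : μ (⋃ j, K ∩ S j) = μ K := by
    refine measure_congr ?_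
    filter_upwards [hcover] with x hx
    exact propext ⟨fun h => (mem_iUnion.1 h).elim fun _ hj => hj.1,
      fun hxK => (hx hxK).elim fun j hj => mem_iUnion.2 ⟨j, hxK, hj⟩⟩
  have hlim : Tendsto (fun j => μ (K ∩ S j)) atTop (𝓝 (μ K)) := hKS ▸
    tendsto_measure_iUnion_atTop fun _ _ hij => inter_subset_inter_right K (hS hij)
  obtain ⟨j, hj⟩ := ((hlim.add_const ε).eventually_const_lt (ENNReal.lt_add_right hK hε)).exists
  refine ⟨j, fun T hT hKT => ?_⟩
  rw [← measure_inter_add_sdiff₀ K hT] at hj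
  exact lt_of_add_lt_add_left
    (hj.trans_le (add_le_add_left (measure_mono (subset_inter inter_subset_left hKT)) ε))

theorem measurableSet_sep_eq {β : Type*} [MeasurableSpace β] [MeasurableEq β]
    {P : Set α} (hP : MeasurableSet P) {f g : α → β}
    (hf : Measurable fun x : P => f x) (hg : Measurable g) :
    MeasurableSet {x ∈ P | f x = g x} := by
  have himage : {x ∈ P | f x = g x} = Subtype.val '' {x : P | f x = g x} := by
    ext x
    simp [and_comm]
  exact himage ▸ hP.subtype_image (measurableSet_eq_fun hf (hg.comp measurable_subtype_coe))

end MeasureTheoreticPreliminaries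

section Mollification

variable {E F : Type*} [NormedAddCommGroup E] [NormedSpace ℝ E] [NormedAddCommGroup F]
  [NormedSpace ℝ F]

/-- `g` is affine on the closed ball of radius `r` around `x`, up to the error `η * ‖z - x‖`. For
fixed `η > 0` this holds at every point of differentiability once `r` is small, so `r` quantifies
differentiability of `g` at `x` at the precision `η`. -/
def IsAlmostAffineAt (g : E → F) (η r : ℝ) (x : E) : Prop :=
  ∃ L : E →L[ℝ] F, ∀ z ∈ closedBall x r, ‖g z - g x - L (z - x)‖ ≤ η * ‖z - x‖

theorem IsAlmostAffineAt.mono {g : E → F} {η r s : ℝ} {x : E} (h : IsAlmostAffineAt g η s x)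
    (hrs : r ≤ s) : IsAlmostAffineAt g η r x :=
  h.imp fun _ hL z hz => hL z (closedBall_subset_closedBall hrs hz)

theorem exists_isAlmostAffineAt_of_differentiableAt {g : E → F} {x : E}
    (hg : DifferentiableAt ℝ g x) {η : ℝ} (hη : 0 < η) : ∃ r > 0, IsAlmostAffineAt g η r x := by
  obtain ⟨r, hr, hball⟩ := Metric.nhds_basis_closedBall.eventually_iff.1
    (hg.hasFDerivAt.isLittleO.def hη)
  exact ⟨r, hr, fderiv ℝ g x, fun z hz => hball hz⟩

variable [FiniteDimensional ℝ E]

variable (E) in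
theorem exists_bump_lipschitz_le_div_rIn :
    ∃ C : ℝ≥0, ∀ b : ContDiffBump (0 : E), b.rOut = 2 * b.rIn →
      ∀ x y, |b x - b y| ≤ C / b.rIn * ‖x - y‖ := by
  let b₁ : ContDiffBump (0 : E) := ⟨1, 2, one_pos, one_lt_two⟩
  obtain ⟨C, hC⟩ := (b₁.contDiff (n := 1)).lipschitzWith_of_hasCompactSupport
    b₁.hasCompactSupport one_ne_zero
  refine ⟨C, fun b hb x y => ?_⟩
  have hscale : ∀ z, b z = b₁ (b.rIn⁻¹ • z) := fun z => by
    simp [ContDiffBump.apply, b₁, hb, b.rIn_pos.ne']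
  rw [hscale, hscale, ← Real.dist_eq]
  refine (hC.dist_le_mul _ _).trans_eq ?_
  rw [dist_smul₀, norm_inv, Real.norm_of_nonneg b.rIn_pos.le, dist_eq_norm]
  ring

variable [MeasurableSpace E]

/-- The mollification `φ ⋆ g` of `g`, with kernel `φ` the bump function `b` normalised to have
integral one with respect to `μ`. -/
noncomputable def mollify (b : ContDiffBump (0 : E)) (μ : Measure E) (g : E → F) : E → F :=
  b.normed μ ⋆[ContinuousLinearMap.lsmul ℝ ℝ, μ] g

theorem mollify_apply (b : ContDiffBump (0 : E)) (μ : Measure E) (g : E → F) (x : E) :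
    mollify b μ g x = ∫ w, b.normed μ w • g (x - w) ∂μ :=
  rfl

variable [BorelSpace E]

variable {μ : Measure E} [μ.IsAddHaarMeasure] (b : ContDiffBump (0 : E)) {g : E → F}

theorem integrable_normed_smul (hg : Continuous g) :
    Integrable (fun w => b.normed μ w • g w) μ :=
  (b.continuous_normed.smul hg).integrable_of_hasCompactSupport
    b.hasCompactSupport_normed.smul_right

theorem mollify_sub {k : E → F} (hg : Continuous g) (hk : Continuous k) (x : E) :
    mollify b μ (fun z => g z - k z) x = mollify b μ g x - mollify b μ k x := by
  simp only [mollify_apply, smul_sub]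
  exact integral_sub (integrable_normed_smul b (by fun_prop : Continuous fun w => g (x - w)))
    (integrable_normed_smul b (by fun_prop : Continuous fun w => k (x - w)))

theorem mollify_const [CompleteSpace F] (c : F) (x : E) : mollify b μ (fun _ => c) x = c :=
  b.integral_normed_smul μ c

-- The kernel is even, so the linear part of `w ↦ L (x - w)` integrates to zero.
theorem mollify_clm [CompleteSpace F] (L : E →L[ℝ] F) (x : E) : mollify b μ L x = L x := by
  have hodd : ∫ w, b.normed μ w • L w ∂μ = 0 := by
    have h := integral_neg_eq_self (fun w => b.normed μ w • L w) μ
    simp only [b.normed_neg, map_neg, smul_neg, integral_neg] at h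
    have := IsAddTorsionFree.of_isTorsionFree ℝ F
    exact self_eq_neg.1 h.symm
  simp only [mollify_apply, map_sub, smul_sub]
  rw [integral_sub (integrable_normed_smul b continuous_const)
    (integrable_normed_smul b L.continuous), hodd, sub_zero, b.integral_normed_smul μ]

theorem mollify_affine_remainder [CompleteSpace F] (hg : Continuous g) (L : E →L[ℝ] F) (x y : E) :
    mollify b μ (fun z => g z - g x - L (z - x)) y = mollify b μ g y - g x - L (y - x) := by
  have hsplit : (fun z => g z - g x - L (z - x)) = fun z => g z - g x + L x - L z := by
    funext z
    rw [map_sub]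
    abel
  have hcst : (fun z => g z - g x + L x) = fun z => g z - (g x - L x) := by
    funext z
    abel
  rw [hsplit, mollify_sub b (by fun_prop) L.continuous, mollify_clm, hcst,
    mollify_sub b hg continuous_const, mollify_const, map_sub]
  abel

theorem contDiff_mollify (hg : Continuous g) : ContDiff ℝ 1 (mollify b μ g) :=
  b.hasCompactSupport_normed.contDiff_convolution_left _ b.contDiff_normed hg.locallyIntegrable

theorem lipschitzWith_mollify {M : ℝ≥0} (hg : LipschitzWith M g) :
    LipschitzWith M (mollify b μ g) := by
  have hgc := hg.continuous
  refine LipschitzWith.of_dist_le_mul fun x y => ?_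
  calc dist (mollify b μ g x) (mollify b μ g y)
      = ‖∫ w, b.normed μ w • (g (x - w) - g (y - w)) ∂μ‖ := by
        simp only [dist_eq_norm, mollify_apply, smul_sub]
        rw [integral_sub (integrable_normed_smul b (by fun_prop : Continuous fun w => g (x - w)))
          (integrable_normed_smul b (by fun_prop : Continuous fun w => g (y - w)))]
    _ ≤ ∫ w, b.normed μ w * (M * dist x y) ∂μ := by
        refine norm_integral_le_of_norm_le (b.integrable_normed.mul_const _)
          (.of_forall fun w => ?_)
        rw [norm_smul, Real.norm_of_nonneg (b.nonneg_normed w)]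
        refine mul_le_mul_of_nonneg_left ?_ (b.nonneg_normed w)
        simpa only [dist_eq_norm, sub_sub_sub_cancel_right] using hg.dist_le_mul (x - w) (y - w)
    _ = M * dist x y := by rw [integral_mul_const, b.integral_normed, one_mul]

theorem norm_mollify_sub_self_le [CompleteSpace F] (hg : Continuous g) {η : ℝ} (hη : 0 ≤ η)
    {x : E} (hx : IsAlmostAffineAt g η b.rOut x) : ‖mollify b μ g x - g x‖ ≤ η * b.rOut := by
  obtain ⟨L, hL⟩ := hx
  have hrem : Continuous fun z => g z - g x - L (z - x) := by fun_prop
  have h := b.dist_normed_convolution_le (μ := μ) (x₀ := x) (ε := η * b.rOut)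
    hrem.aestronglyMeasurable fun z hz => by
      simpa using (hL z (ball_subset_closedBall hz)).trans
        (mul_le_mul_of_nonneg_left (mem_ball_iff_norm.1 hz).le hη)
  rw [← mollify, mollify_affine_remainder b hg] at h
  simpa using h

variable (μ) in
theorem exists_normed_bump_lipschitz_le :
    ∃ C : ℝ≥0, ∀ b : ContDiffBump (0 : E), b.rOut = 2 * b.rIn → ∀ x y,
      |b.normed μ x - b.normed μ y| ≤ C / (b.rIn * μ.real (closedBall 0 b.rIn)) * ‖x - y‖ := by
  obtain ⟨C, hC⟩ := exists_bump_lipschitz_le_div_rIn E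
  refine ⟨C, fun b hb x y => ?_⟩
  have hball : 0 < μ.real (closedBall 0 b.rIn) :=
    ENNReal.toReal_pos (measure_closedBall_pos μ 0 b.rIn_pos).ne' measure_closedBall_lt_top.ne
  rw [b.normed_def, b.normed_def, ← sub_div, abs_div, abs_of_pos b.integral_pos]
  calc |b x - b y| / ∫ z, b z ∂μ
      ≤ (C / b.rIn * ‖x - y‖) / μ.real (closedBall 0 b.rIn) := by
        have := b.rIn_pos
        gcongr
        exacts [hC b hb x y, b.measure_closedBall_le_integral μ]
    _ = C / (b.rIn * μ.real (closedBall 0 b.rIn)) * ‖x - y‖ := by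
        rw [← div_div, div_mul_eq_mul_div, div_mul_eq_mul_div, div_mul_eq_mul_div]

theorem norm_mollify_sub_mollify_le {k : E → F} (hk : Continuous k) {A B : ℝ} (hA : 0 ≤ A)
    (hb : ∀ u v, |b.normed μ u - b.normed μ v| ≤ A * ‖u - v‖) {x y : E} (hxy : ‖y - x‖ ≤ b.rOut)
    (hkB : ∀ z ∈ closedBall x (2 * b.rOut), ‖k z‖ ≤ B) :
    ‖mollify b μ k y - mollify b μ k x‖ ≤
      A * ‖y - x‖ * B * μ.real (closedBall x (2 * b.rOut)) := by
  have hswap : ∀ v, mollify b μ k v = ∫ w, b.normed μ (v - w) • k w ∂μ := fun v =>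
    convolution_eq_swap _
  have hint : ∀ v, Integrable (fun w => b.normed μ (v - w) • k w) μ := fun v => by
    simpa using (integrable_normed_smul b
      (by fun_prop : Continuous fun w => k (v - w))).comp_sub_left v
  have hzero : ∀ w ∉ closedBall x (2 * b.rOut),
      (b.normed μ (y - w) - b.normed μ (x - w)) • k w = 0 := fun w hw => by
    have hfar : 2 * b.rOut < ‖x - w‖ := by
      simpa [dist_eq_norm, norm_sub_rev w] using hw
    have hvanish : ∀ v, b.rOut ≤ ‖v - w‖ → b.normed μ (v - w) = 0 := fun v hv => by
      rw [← Function.notMem_support, b.support_normed_eq]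
      simpa using hv
    have htri := norm_sub_le_norm_sub_add_norm_sub x y w
    rw [norm_sub_rev x y] at htri
    rw [hvanish y (by linarith), hvanish x (by linarith [b.rOut_pos]), sub_zero, zero_smul]
  rw [hswap, hswap, ← integral_sub (hint y) (hint x)]
  simp only [← sub_smul]
  rw [← setIntegral_eq_integral_of_forall_compl_eq_zero hzero]
  refine norm_setIntegral_le_of_norm_le_const measure_closedBall_lt_top fun w hw => ?_
  rw [norm_smul, Real.norm_eq_abs]
  gcongr
  · simpa using hb (y - w) (x - w)
  · exact hkB w hw

theorem norm_mollify_error_sub_le_of_near [CompleteSpace F] (hg : Continuous g) {A η : ℝ}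
    (hA : 0 ≤ A) (hb : ∀ u v, |b.normed μ u - b.normed μ v| ≤ A * ‖u - v‖) (hη : 0 ≤ η) {x y : E}
    (hx : IsAlmostAffineAt g η (2 * b.rOut) x) (hxy : ‖y - x‖ ≤ b.rOut) :
    ‖(mollify b μ g y - g y) - (mollify b μ g x - g x)‖ ≤
      (A * (2 * b.rOut) * μ.real (closedBall x (2 * b.rOut)) + 1) * η * ‖y - x‖ := by
  obtain ⟨L, hL⟩ := hx
  set k : E → F := fun z => g z - g x - L (z - x) with hk
  have hy : y ∈ closedBall x (2 * b.rOut) := by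
    rw [mem_closedBall, dist_eq_norm]
    linarith [b.rOut_pos]
  have hkB : ∀ z ∈ closedBall x (2 * b.rOut), ‖k z‖ ≤ η * (2 * b.rOut) := fun z hz =>
    (hL z hz).trans (mul_le_mul_of_nonneg_left (mem_closedBall_iff_norm.1 hz) hη)
  have herror : (mollify b μ g y - g y) - (mollify b μ g x - g x) =
      (mollify b μ k y - mollify b μ k x) - k y := by
    simp only [hk, mollify_affine_remainder b hg, sub_self, map_zero]
    abel
  calc ‖(mollify b μ g y - g y) - (mollify b μ g x - g x)‖
      ≤ ‖mollify b μ k y - mollify b μ k x‖ + ‖k y‖ := herror ▸ norm_sub_le _ _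
    _ ≤ A * ‖y - x‖ * (η * (2 * b.rOut)) * μ.real (closedBall x (2 * b.rOut)) + η * ‖y - x‖ :=
        add_le_add (norm_mollify_sub_mollify_le b (by fun_prop) hA hb hxy hkB) (hL y hy)
    _ = _ := by ring

theorem norm_mollify_error_sub_le_of_far [CompleteSpace F] (hg : Continuous g) {η : ℝ}
    (hη : 0 ≤ η) {x y : E} (hx : IsAlmostAffineAt g η b.rOut x)
    (hy : IsAlmostAffineAt g η b.rOut y) (hxy : b.rOut ≤ ‖y - x‖) :
    ‖(mollify b μ g y - g y) - (mollify b μ g x - g x)‖ ≤ 2 * η * ‖y - x‖ :=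
  calc ‖(mollify b μ g y - g y) - (mollify b μ g x - g x)‖
      ≤ ‖mollify b μ g y - g y‖ + ‖mollify b μ g x - g x‖ := norm_sub_le _ _
    _ ≤ η * b.rOut + η * b.rOut := add_le_add (norm_mollify_sub_self_le b hg hη hy)
        (norm_mollify_sub_self_le b hg hη hx)
    _ = 2 * η * b.rOut := by ring
    _ ≤ 2 * η * ‖y - x‖ := by gcongr

variable (F μ) in
theorem exists_norm_mollify_error_sub_le [CompleteSpace F] :
    ∃ C : ℝ≥0, ∀ b : ContDiffBump (0 : E), b.rOut = 2 * b.rIn → ∀ (g : E → F) (η : ℝ) (x y : E),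
      Continuous g → 0 ≤ η → IsAlmostAffineAt g η (2 * b.rOut) x →
      IsAlmostAffineAt g η (2 * b.rOut) y →
      ‖(mollify b μ g y - g y) - (mollify b μ g x - g x)‖ ≤ C * η * ‖y - x‖ := by
  obtain ⟨C, hC⟩ := exists_normed_bump_lipschitz_le μ
  refine ⟨C * 4 ^ (Module.finrank ℝ E + 1) + 2, fun b hb g η x y hg hη hx hy => ?_⟩
  have hrIn := b.rIn_pos
  rcases le_total ‖y - x‖ b.rOut with hnear | hfar
  · have hball : μ.real (closedBall x (2 * b.rOut)) =
        4 ^ Module.finrank ℝ E * μ.real (closedBall 0 b.rIn) := by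
      rw [hb, show 2 * (2 * b.rIn) = 4 * b.rIn by ring,
        Measure.addHaar_real_closedBall μ x (by positivity),
        Measure.addHaar_real_closedBall μ 0 hrIn.le, mul_pow, mul_assoc]
    set V := μ.real (closedBall 0 b.rIn)
    have hV : 0 < V :=
      ENNReal.toReal_pos (measure_closedBall_pos μ 0 hrIn).ne' measure_closedBall_lt_top.ne
    have hconst : C / (b.rIn * V) * (2 * (2 * b.rIn)) * (4 ^ Module.finrank ℝ E * V) =
        C * 4 ^ (Module.finrank ℝ E + 1) := by
      field_simp
      ring
    refine (norm_mollify_error_sub_le_of_near b hg (by positivity) (hC b hb) hη hx hnear).trans ?_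
    rw [hball, hb, hconst]
    push_cast
    gcongr
    norm_num
  · have hle : b.rOut ≤ 2 * b.rOut := by linarith [b.rOut_pos]
    refine (norm_mollify_error_sub_le_of_far b hg hη (hx.mono hle) (hy.mono hle) hfar).trans ?_
    gcongr
    push_cast
    exact le_add_of_nonneg_left (by positivity)

end Mollification

section LipschitzMaps

theorem hasSum_sub_of_telescoping {X F : Type*} [PseudoMetricSpace X] [NormedAddCommGroup F]
    [CompleteSpace F] {c : ℕ → ℝ≥0} (hc : Summable c) {gs hs : ℕ → X → F}
    (hgs : ∀ k, LipschitzWith (c k) (gs k)) (hhs : ∀ k, LipschitzWith (c k) (hs k)) {x y : X}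
    (hx : ∀ k, gs k x = hs k x + gs (k + 1) x) (hy : ∀ k, gs k y = hs k y + gs (k + 1) y) :
    HasSum (fun k => hs k x - hs k y) (gs 0 x - gs 0 y) := by
  have hc' : Summable fun k => (c k : ℝ) := NNReal.summable_coe.2 hc
  have hsummable : Summable fun k => hs k x - hs k y :=
    .of_norm_bounded (hc'.mul_right (dist x y)) fun k =>
      (dist_eq_norm (hs k x) (hs k y)).symm.trans_le ((hhs k).dist_le_mul x y)
  have hrem : Tendsto (fun N => gs N x - gs N y) atTop (𝓝 0) :=
    squeeze_zero_norm (fun N => (dist_eq_norm _ _).symm.trans_le ((hgs N).dist_le_mul x y))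
      (by simpa only [zero_mul] using hc'.tendsto_atTop_zero.mul_const (dist x y))
  have hpartial : ∀ N, ∑ k ∈ Finset.range N, (hs k x - hs k y) =
      gs 0 x - gs 0 y - (gs N x - gs N y) := fun N => by
    rw [← Finset.sum_range_sub' (fun k => gs k x - gs k y)]
    refine Finset.sum_congr rfl fun k _ => ?_
    rw [hx k, hy k]
    abel
  rw [hsummable.hasSum_iff_tendsto_nat]
  simpa only [hpartial, sub_zero] using hrem.const_sub (gs 0 x - gs 0 y)

variable {E F : Type*} [NormedAddCommGroup E] [NormedSpace ℝ E] [NormedAddCommGroup F]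
  [NormedSpace ℝ F]

section Telescoping

variable [CompleteSpace F]

theorem contDiff_tsum_sub_of_lipschitzWith {c : ℕ → ℝ≥0} (hc : Summable c) {hs : ℕ → E → F}
    (hhs : ∀ k, ContDiff ℝ 1 (hs k)) (hhs_lip : ∀ k, LipschitzWith (c k) (hs k)) (x₀ : E) :
    ContDiff ℝ 1 fun x => ∑' k, (hs k x - hs k x₀) := by
  have hc' : Summable fun k => (c k : ℝ) := NNReal.summable_coe.2 hc
  have hderiv : ∀ k x, HasFDerivAt (fun x => hs k x - hs k x₀) (fderiv ℝ (hs k) x) x := fun k x =>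
    ((hhs k).differentiable one_ne_zero x).hasFDerivAt.sub_const _
  have hbound : ∀ k x, ‖fderiv ℝ (hs k) x‖ ≤ c k := fun k _ =>
    norm_fderiv_le_of_lipschitz ℝ (hhs_lip k)
  have hsum₀ : Summable fun k => hs k x₀ - hs k x₀ := by simpa only [sub_self] using summable_zero
  exact contDiff_one_iff_hasFDerivAt.2 ⟨fun x => ∑' k, fderiv ℝ (hs k) x,
    continuous_tsum (fun k => (hhs k).continuous_fderiv one_ne_zero) hc' hbound,
    hasFDerivAt_tsum hc' hderiv hbound hsum₀⟩

theorem exists_contDiff_eq_of_telescoping {c : ℕ → ℝ≥0} (hc : Summable c)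
    {gs hs : ℕ → E → F} (hgs : ∀ k, LipschitzWith (c k) (gs k)) (hhs : ∀ k, ContDiff ℝ 1 (hs k))
    (hhs_lip : ∀ k, LipschitzWith (c k) (hs k)) :
    ∃ H : E → F, ContDiff ℝ 1 H ∧ ∀ x, (∀ k, gs k x = hs k x + gs (k + 1) x) → H x = gs 0 x := by
  by_cases hex : ∃ x₀, ∀ k, gs k x₀ = hs k x₀ + gs (k + 1) x₀
  · obtain ⟨x₀, hx₀⟩ := hex
    refine ⟨fun x => gs 0 x₀ + ∑' k, (hs k x - hs k x₀),
      contDiff_const.add (contDiff_tsum_sub_of_lipschitzWith hc hhs hhs_lip x₀), fun x hx => ?_⟩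
    simp only [(hasSum_sub_of_telescoping hc hgs hhs_lip hx hx₀).tsum_eq, add_sub_cancel]
  · exact ⟨0, contDiff_const, fun x hx => (hex ⟨x, hx⟩).elim⟩

end Telescoping

variable [FiniteDimensional ℝ E] [FiniteDimensional ℝ F]

variable (E F) in
theorem exists_contDiff_lipschitzOnWith_sub :
    ∃ C : ℝ≥0, ∀ (g : E → F) (M η : ℝ≥0) (r : ℝ), LipschitzWith M g → 0 < r →
      ∃ h : E → F, ContDiff ℝ 1 h ∧ LipschitzWith M h ∧
        LipschitzOnWith (C * η) (fun x => g x - h x) {x | IsAlmostAffineAt g η r x} := by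
  let _ : MeasurableSpace E := borel E
  have _ : BorelSpace E := ⟨rfl⟩
  let μ : Measure E := Measure.addHaar
  obtain ⟨C, hC⟩ := exists_norm_mollify_error_sub_le F μ
  refine ⟨C, fun g M η r hg hr => ?_⟩
  let b : ContDiffBump (0 : E) := ⟨r / 4, r / 2, by positivity, by linarith⟩
  have hrOut : 2 * b.rOut = r := mul_div_cancel₀ r two_ne_zero
  refine ⟨mollify b μ g, contDiff_mollify b hg.continuous, lipschitzWith_mollify b hg,
    LipschitzOnWith.of_dist_le_mul fun x hx y hy => ?_⟩
  calc dist (g x - mollify b μ g x) (g y - mollify b μ g y)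
      = ‖(mollify b μ g y - g y) - (mollify b μ g x - g x)‖ := by
        rw [dist_eq_norm]
        congr 1
        abel
    _ ≤ C * η * ‖y - x‖ := hC b (by simp only [b]; ring) g η x y hg.continuous η.2
        (hrOut ▸ hx) (hrOut ▸ hy)
    _ = ↑(C * η) * dist x y := by rw [dist_eq_norm, norm_sub_rev, NNReal.coe_mul]

variable [MeasurableSpace E] [BorelSpace E]
  {μ : Measure E} [μ.IsAddHaarMeasure] {g : E → F} {M : ℝ≥0}

theorem exists_isAlmostAffineAt_measure_diff_lt (hg : LipschitzWith M g) {K : Set E}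
    (hK : μ K ≠ ∞) {η : ℝ} (hη : 0 < η) {ε : ℝ≥0∞} (hε : ε ≠ 0) :
    ∃ r > 0, ∀ T, NullMeasurableSet T μ → K ∩ {x | IsAlmostAffineAt g η r x} ⊆ T →
      μ (K \ T) < ε := by
  let S : ℕ → Set E := fun j => {x | IsAlmostAffineAt g η (1 / (j + 1)) x}
  have hS : Monotone S := fun i j hij x hx => hx.mono (Nat.one_div_le_one_div hij)
  have hcover : ∀ᵐ x ∂μ, x ∈ K → ∃ j, x ∈ S j := by
    filter_upwards [hg.ae_differentiableAt (μ := μ)] with x hx _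
    obtain ⟨r, hr, hxr⟩ := exists_isAlmostAffineAt_of_differentiableAt hx hη
    exact (exists_nat_one_div_lt hr).imp fun j hj => hxr.mono hj.le
  obtain ⟨j, hj⟩ := exists_measure_diff_lt_of_ae_mem_monotone hS hK hcover hε
  exact ⟨1 / (j + 1), Nat.one_div_pos_of_nat, hj⟩

theorem exists_contDiff_add_lipschitz_measure_ne_lt (hg : LipschitzWith M g) {K : Set E}
    (hK : μ K ≠ ∞) {η : ℝ≥0} (hη : 0 < η) {ε : ℝ≥0∞} (hε : ε ≠ 0) :
    ∃ h u : E → F, ContDiff ℝ 1 h ∧ LipschitzWith M h ∧ LipschitzWith η u ∧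
      μ {x ∈ K | g x ≠ h x + u x} < ε := by
  obtain ⟨C, hC⟩ := exists_contDiff_lipschitzOnWith_sub E F
  set A := lipschitzExtensionConstant F
  obtain ⟨η', hη', hη'_le⟩ : ∃ η' > 0, A * (C * η') ≤ η := by
    refine ⟨η / (A * C + 1), by positivity, ?_⟩
    rw [← mul_assoc, mul_div_assoc']
    exact div_le_of_le_mul₀ zero_le zero_le (by rw [mul_comm]; gcongr; exact le_self_add)
  obtain ⟨r, hr, hlarge⟩ := exists_isAlmostAffineAt_measure_diff_lt hg hK hη' hε
  obtain ⟨h, hh, hh_lip, hsub⟩ := hC g M η' r hg hr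
  obtain ⟨u, hu_lip, hu⟩ := hsub.extend_finite_dimension
  refine ⟨h, u, hh, hh_lip, hu_lip.weaken hη'_le, hlarge {x | g x = h x + u x} ?_ ?_⟩
  · exact (isClosed_eq hg.continuous
      (hh.continuous.add hu_lip.continuous)).measurableSet.nullMeasurableSet
  · exact fun x hx => (add_sub_cancel (h x) (g x)).symm.trans (congrArg (h x + ·) (hu hx.2))

theorem exists_seq_contDiff_add_lipschitz {c : ℕ → ℝ≥0} (hc : ∀ k, 0 < c k)
    (hg : LipschitzWith (c 0) g) {K : Set E} (hK : μ K ≠ ∞) {ε : ℕ → ℝ≥0∞} (hε : ∀ k, ε k ≠ 0) :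
    ∃ gs hs : ℕ → E → F, gs 0 = g ∧ ∀ k, LipschitzWith (c k) (gs k) ∧ ContDiff ℝ 1 (hs k) ∧
      LipschitzWith (c k) (hs k) ∧ μ {x ∈ K | gs k x ≠ hs k x + gs (k + 1) x} < ε k := by
  have hstep : ∀ (k : ℕ) (q : E → F), ∃ h u : E → F, LipschitzWith (c k) q →
      ContDiff ℝ 1 h ∧ LipschitzWith (c k) h ∧ LipschitzWith (c (k + 1)) u ∧
        μ {x ∈ K | q x ≠ h x + u x} < ε k := fun k q => by
    by_cases hq : LipschitzWith (c k) q
    · obtain ⟨h, u, hhu⟩ := exists_contDiff_add_lipschitz_measure_ne_lt hq hK (hc (k + 1)) (hε k)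
      exact ⟨h, u, fun _ => hhu⟩
    · exact ⟨0, 0, fun h => absurd h hq⟩
  choose smoothPart remainder hdecomp using hstep
  let gs : ℕ → E → F := fun k => k.rec g remainder
  have hgs : ∀ k, LipschitzWith (c k) (gs k) := fun k => by
    induction k with
    | zero => exact hg
    | succ k ih => exact (hdecomp k _ ih).2.2.1
  exact ⟨gs, fun k => smoothPart k (gs k), rfl, fun k => ⟨hgs k, (hdecomp k _ (hgs k)).1,
    (hdecomp k _ (hgs k)).2.1, (hdecomp k _ (hgs k)).2.2.2⟩⟩

theorem exists_contDiff_measure_ne_lt_of_lipschitzWith (hg : LipschitzWith M g) {K : Set E}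
    (hK : μ K ≠ ∞) {ε : ℝ≥0∞} (hε : ε ≠ 0) :
    ∃ h : E → F, ContDiff ℝ 1 h ∧ μ {x ∈ K | g x ≠ h x} < ε := by
  obtain ⟨ε', hε', hε'_sum⟩ := ENNReal.exists_pos_sum_of_countable' hε ℕ
  let c : ℕ → ℝ≥0 := fun k => (M + 1) * (1 / 2) ^ k
  have hc_sum : Summable c := (NNReal.summable_geometric (by norm_num)).mul_left _
  obtain ⟨gs, hs, rfl, hseq⟩ := exists_seq_contDiff_add_lipschitz (c := c)
    (fun k => by positivity) (hg.weaken (by simp [c])) hK fun k => (hε' k).ne'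
  obtain ⟨h, hh, h_eq⟩ := exists_contDiff_eq_of_telescoping hc_sum (fun k => (hseq k).1)
    (fun k => (hseq k).2.1) fun k => (hseq k).2.2.1
  have hsub : {x ∈ K | gs 0 x ≠ h x} ⊆ ⋃ k, {x ∈ K | gs k x ≠ hs k x + gs (k + 1) x} := by
    rintro x ⟨hxK, hx⟩
    obtain ⟨k, hk⟩ := not_forall.1 (mt (h_eq x) (Ne.symm hx))
    exact mem_iUnion.2 ⟨k, hxK, hk⟩
  refine ⟨h, hh, lt_of_le_of_lt ?_ hε'_sum⟩
  calc μ {x ∈ K | gs 0 x ≠ h x}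
      ≤ ∑' k, μ {x ∈ K | gs k x ≠ hs k x + gs (k + 1) x} :=
        (measure_mono hsub).trans (measure_iUnion_le _)
    _ ≤ ∑' k, ε' k := ENNReal.tsum_le_tsum fun k => (hseq k).2.2.2.le

end LipschitzMaps

section Density

variable {X Y : Type*} [PseudoMetricSpace X]

/-- The points that do not witness that the difference quotients of `f : P → Y` at `a` are bounded
by `K`. Points outside `P` are included. -/
def lipschitzDefect [PseudoMetricSpace Y] (P : Set X) (f : X → Y) (K : ℝ) (a : X) : Set X :=
  {z | z ∈ P → K * dist z a < dist (f z) (f a)}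

theorem lipschitzDefect_anti [PseudoMetricSpace Y] (P : Set X) (f : X → Y) (a : X) :
    Antitone fun K : ℝ => lipschitzDefect P f K a :=
  fun _ _ hKL _ hz hzP => (mul_le_mul_of_nonneg_right hKL dist_nonneg).trans_lt (hz hzP)

variable [MeasurableSpace X] {μ : Measure X}

theorem HasDensityAt.mono_zero {A B : Set X} {x : X} (hB : HasDensityAt μ B x 0) (hAB : A ⊆ B) :
    HasDensityAt μ A x 0 :=
  tendsto_of_tendsto_of_tendsto_of_le_of_le tendsto_const_nhds hB (fun _ => zero_le)
    fun _ => ENNReal.div_le_div_right (measure_mono (inter_subset_inter_left _ hAB)) _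

theorem HasDensityAt.union_zero {A B : Set X} {x : X} (hA : HasDensityAt μ A x 0)
    (hB : HasDensityAt μ B x 0) : HasDensityAt μ (A ∪ B) x 0 := by
  refine tendsto_of_tendsto_of_tendsto_of_le_of_le tendsto_const_nhds
    (by simpa only [add_zero] using Tendsto.add hA hB) (fun _ => zero_le) fun r => ?_
  rw [union_inter_distrib_right, ← ENNReal.add_div]
  exact ENNReal.div_le_div_right (measure_union_le _ _) _

theorem HasDensityAt.eventually_measure_inter_ball_le {A : Set X} {x : X}
    (hA : HasDensityAt μ A x 0) {θ : ℝ≥0∞} (hθ : θ ≠ 0) :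
    ∀ᶠ r in 𝓝[>] (0 : ℝ), μ (A ∩ ball x r) ≤ θ * μ (ball x r) := by
  filter_upwards [hA.eventually_le_const (pos_iff_ne_zero.2 hθ)] with r hr
  rcases eq_or_ne (μ (ball x r)) 0 with hball | hball
  · exact (measure_mono_null inter_subset_right hball).trans_le zero_le
  · exact (ENNReal.div_le_iff_le_mul (.inl hball) (.inr hθ)).1 hr

theorem exists_mem_ball_notMem_notMem {A B : Set X} {x y : X} {r : ℝ} (hxy : dist x y ≤ r)
    (hAB : μ (A ∩ ball x (2 * r)) + μ (B ∩ ball y (2 * r)) < μ (ball x r)) :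
    ∃ z ∈ ball x r, z ∉ A ∧ z ∉ B := by
  by_contra! hcover
  refine hAB.not_ge ((measure_mono fun z hz => ?_).trans (measure_union_le _ _))
  have hzx : dist z x < r := hz
  have hzy : dist z y < 2 * r := by linarith [dist_triangle z x y]
  by_cases hzA : z ∈ A
  · exact .inl ⟨hzA, ball_subset_ball (by linarith [dist_nonneg (x := z) (y := x)]) hz⟩
  · exact .inr ⟨hcover z hz hzA, hzy⟩

/-- `f`, as a map defined on `P`, is approximately Lipschitz at `a`: some difference-quotient
bound holds on `P` off a set of density zero at `a`. -/
def IsApproxLipschitzAt [PseudoMetricSpace Y] (μ : Measure X) (P : Set X) (f : X → Y) (a : X) :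
    Prop :=
  ∃ K : ℝ, HasDensityAt μ {x ∈ P | K * dist x a < dist (f x) (f a)} a 0

/-- The points at which approximate Lipschitz continuity of `f : P → F` is quantified by `k`: it
bounds both `f` and the Lipschitz constant, and below the scale `1 / (k + 1)` the defect fills at
most the proportion `θ` of each ball. -/
def approxLipschitzLevel {F : Type*} [SeminormedAddCommGroup F] (μ : Measure X) (P : Set X)
    (f : X → F) (θ : ℝ≥0∞) (k : ℕ) : Set X :=
  {a | ‖f a‖ ≤ k ∧ ∀ r ∈ Ioo (0 : ℝ) (1 / (k + 1)),
    μ (lipschitzDefect P f k a ∩ ball a r) ≤ θ * μ (ball a r)}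

theorem IsApproxLipschitzAt.exists_hasDensityAt_lipschitzDefect [PseudoMetricSpace Y] {P : Set X}
    {f : X → Y} {a : X} (hf : IsApproxLipschitzAt μ P f a) (hP : HasDensityAt μ Pᶜ a 0) :
    ∃ K, HasDensityAt μ (lipschitzDefect P f K a) a 0 := by
  refine hf.imp fun K hK => (hP.union_zero hK).mono_zero fun z hz => ?_
  by_cases hzP : z ∈ P
  · exact .inr ⟨hzP, hz hzP⟩
  · exact .inl hzP

variable {F : Type*} [SeminormedAddCommGroup F] {P : Set X} {f : X → F} {θ : ℝ≥0∞}

theorem monotone_approxLipschitzLevel : Monotone (approxLipschitzLevel μ P f θ) := by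
  rintro j k hjk a ⟨hfa, hdefect⟩
  have hjk' : (j : ℝ) ≤ k := Nat.cast_le.2 hjk
  exact ⟨hfa.trans hjk', fun r hr =>
    (measure_mono (inter_subset_inter_left _ (lipschitzDefect_anti P f a hjk'))).trans
      (hdefect r ⟨hr.1, hr.2.trans_le (Nat.one_div_le_one_div hjk)⟩)⟩

theorem IsApproxLipschitzAt.exists_mem_approxLipschitzLevel {a : X}
    (hf : IsApproxLipschitzAt μ P f a) (hP : HasDensityAt μ Pᶜ a 0) (hθ : θ ≠ 0) :
    ∃ k, a ∈ approxLipschitzLevel μ P f θ k := by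
  obtain ⟨K, hK⟩ := hf.exists_hasDensityAt_lipschitzDefect hP
  obtain ⟨δ, hδ, hsmall⟩ := (nhdsGT_basis (0 : ℝ)).eventually_iff.1
    (hK.eventually_measure_inter_ball_le hθ)
  obtain ⟨k, hKk, hfk, hδk⟩ := ((tendsto_natCast_atTop_atTop.eventually_ge_atTop K).and
    ((tendsto_natCast_atTop_atTop.eventually_ge_atTop ‖f a‖).and
      (tendsto_one_div_add_atTop_nhds_zero_nat.eventually_lt_const hδ))).exists
  exact ⟨k, hfk, fun r hr =>
    (measure_mono (inter_subset_inter_left _ (lipschitzDefect_anti P f a hKk))).trans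
      (hsmall ⟨hr.1, hr.2.trans hδk⟩)⟩

theorem dist_le_of_mem_approxLipschitzLevel_of_far {k : ℕ} {x y : X}
    (hx : x ∈ approxLipschitzLevel μ P f θ k) (hy : y ∈ approxLipschitzLevel μ P f θ k)
    (hfar : 1 / (k + 1) ≤ 2 * dist x y) :
    dist (f x) (f y) ≤ 4 * k * (k + 1) * dist x y := by
  have hfar' : 1 ≤ 2 * dist x y * (k + 1) := (div_le_iff₀ (by positivity)).1 hfar
  calc dist (f x) (f y) ≤ ‖f x‖ + ‖f y‖ := dist_le_norm_add_norm _ _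
    _ ≤ 2 * k * 1 := by linarith [hx.1, hy.1]
    _ ≤ 2 * k * (2 * dist x y * (k + 1)) := by gcongr
    _ = 4 * k * (k + 1) * dist x y := by ring

end Density

section ApproxLipschitz

variable {E F : Type*} [NormedAddCommGroup E] [NormedSpace ℝ E] [FiniteDimensional ℝ E]
  [MeasurableSpace E] [BorelSpace E] {μ : Measure E} [μ.IsAddHaarMeasure] {P : Set E}

theorem ae_mem_imp_hasDensityAt_compl_zero (hP : MeasurableSet P) :
    ∀ᵐ a ∂μ, a ∈ P → HasDensityAt μ Pᶜ a 0 := by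
  have := FiniteDimensional.proper_real E
  filter_upwards [Besicovitch.ae_tendsto_measure_inter_div_of_measurableSet μ hP.compl]
    with a ha haP
  rw [indicator_of_notMem (notMem_compl_iff.2 haP)] at ha
  refine tendsto_of_tendsto_of_tendsto_of_le_of_le' tendsto_const_nhds ha
    (.of_forall fun _ => zero_le) (eventually_mem_nhdsWithin.mono fun r hr => ?_)
  rw [Measure.addHaar_ball_of_pos μ a hr, Measure.addHaar_closedBall μ a (le_of_lt hr)]
  exact ENNReal.div_le_div_right
    (measure_mono (inter_subset_inter_right _ ball_subset_closedBall)) _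

section LevelSets

variable [SeminormedAddCommGroup F] {f : E → F} {θ : ℝ≥0∞} {k : ℕ} {x y : E}

-- The defects of `x` and `y` cannot cover `ball x (dist x y)`, so some point of `P` near both
-- transfers the difference-quotient bound.
theorem dist_le_of_mem_approxLipschitzLevel_of_near (hθ : θ * 2 ^ (Module.finrank ℝ E + 1) < 1)
    (hx : x ∈ approxLipschitzLevel μ P f θ k) (hy : y ∈ approxLipschitzLevel μ P f θ k)
    (hxy : 0 < dist x y) (hnear : 2 * dist x y < 1 / (k + 1)) :
    dist (f x) (f y) ≤ 3 * k * dist x y := by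
  set r := dist x y
  have hball : ∀ z, μ (ball z (2 * r)) = 2 ^ Module.finrank ℝ E * μ (ball x r) := fun z => by
    rw [Measure.addHaar_ball_mul_of_pos μ z two_pos, ← Measure.addHaar_ball_center μ x,
      ENNReal.ofReal_pow two_pos.le, ENNReal.ofReal_ofNat]
  have hdefect : μ (lipschitzDefect P f k x ∩ ball x (2 * r)) +
      μ (lipschitzDefect P f k y ∩ ball y (2 * r)) < μ (ball x r) := by
    have hr : 2 * r ∈ Ioo (0 : ℝ) (1 / (k + 1)) := ⟨by positivity, hnear⟩
    refine (add_le_add (hx.2 _ hr) (hy.2 _ hr)).trans_lt ?_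
    calc θ * μ (ball x (2 * r)) + θ * μ (ball y (2 * r))
        = θ * 2 ^ (Module.finrank ℝ E + 1) * μ (ball x r) := by
          rw [hball x, hball y]
          ring
      _ < 1 * μ (ball x r) :=
          ENNReal.mul_lt_mul_left (measure_ball_pos μ x hxy).ne' measure_ball_lt_top.ne hθ
      _ = μ (ball x r) := one_mul _
  obtain ⟨z, hz, hzx, hzy⟩ := exists_mem_ball_notMem_notMem le_rfl hdefect
  simp only [lipschitzDefect, mem_ofPred_eq, Classical.not_imp, not_lt] at hzx hzy
  have hzx_lt : dist z x < r := hz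
  have hzy_le : dist z y ≤ 2 * r := by linarith [dist_triangle z x y]
  calc dist (f x) (f y) ≤ dist (f z) (f x) + dist (f z) (f y) := dist_triangle_left _ _ _
    _ ≤ k * dist z x + k * dist z y := add_le_add hzx.2 hzy.2
    _ ≤ k * r + k * (2 * r) := by gcongr
    _ = 3 * k * r := by ring

theorem lipschitzOnWith_approxLipschitzLevel (hθ : θ * 2 ^ (Module.finrank ℝ E + 1) < 1) :
    LipschitzOnWith (4 * k * (k + 1)) f (approxLipschitzLevel μ P f θ k) := by
  refine LipschitzOnWith.of_dist_le_mul fun x hx y hy => ?_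
  push_cast
  rcases eq_or_ne x y with rfl | hxy
  · simp only [dist_self, mul_zero, le_refl]
  rcases lt_or_ge (2 * dist x y) (1 / (k + 1)) with hnear | hfar
  · have hk : 3 * (k : ℝ) ≤ 4 * k * (k + 1) := by nlinarith [k.cast_nonneg (α := ℝ)]
    exact (dist_le_of_mem_approxLipschitzLevel_of_near hθ hx hy (dist_pos.2 hxy) hnear).trans
      (mul_le_mul_of_nonneg_right hk dist_nonneg)
  · exact dist_le_of_mem_approxLipschitzLevel_of_far hx hy hfar

end LevelSets

variable [NormedAddCommGroup F] [NormedSpace ℝ F] [FiniteDimensional ℝ F] [MeasurableSpace F]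
  [BorelSpace F] {f : E → F}

theorem exists_lipschitzWith_measure_ne_lt (hP : MeasurableSet P) (hPfin : μ P ≠ ∞)
    (hf : Measurable fun x : P => f x) (hap : ∀ᵐ a ∂μ, a ∈ P → IsApproxLipschitzAt μ P f a)
    {ε : ℝ≥0∞} (hε : ε ≠ 0) :
    ∃ (M : ℝ≥0) (g : E → F), LipschitzWith M g ∧ μ {x ∈ P | f x ≠ g x} < ε := by
  have := FiniteDimensional.proper_real F
  obtain ⟨θ, hθ, hθ_lt⟩ := ENNReal.exists_nnreal_pos_mul_lt (a := 2 ^ (Module.finrank ℝ E + 1))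
    (ENNReal.pow_ne_top ENNReal.ofNat_ne_top) one_ne_zero
  have hcover : ∀ᵐ a ∂μ, a ∈ P → ∃ k, a ∈ approxLipschitzLevel μ P f θ k := by
    filter_upwards [hap, ae_mem_imp_hasDensityAt_compl_zero hP] with a hfa hPa haP
    exact (hfa haP).exists_mem_approxLipschitzLevel (hPa haP) (ENNReal.coe_ne_zero.2 hθ.ne')
  obtain ⟨k, hk⟩ :=
    exists_measure_diff_lt_of_ae_mem_monotone monotone_approxLipschitzLevel hPfin hcover hε
  obtain ⟨g, hg, hfg⟩ :=
    (lipschitzOnWith_approxLipschitzLevel (μ := μ) (P := P) (f := f) (k := k)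
      hθ_lt).extend_finite_dimension
  refine ⟨_, g, hg, (measure_mono fun x hx => ?_).trans_lt (hk {x ∈ P | f x = g x}
    (measurableSet_sep_eq hP hf hg.continuous.measurable).nullMeasurableSet
    fun x hx => ⟨hx.1, hfg hx.2⟩)⟩
  exact ⟨hx.1, fun h => hx.2 h.2⟩

theorem exists_contDiff_measure_ne_lt (hP : MeasurableSet P) (hPfin : μ P ≠ ∞)
    (hf : Measurable fun x : P => f x) (hap : ∀ᵐ a ∂μ, a ∈ P → IsApproxLipschitzAt μ P f a)
    {ε : ℝ≥0∞} (hε : ε ≠ 0) : ∃ h : E → F, ContDiff ℝ 1 h ∧ μ {x ∈ P | f x ≠ h x} < ε := by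
  have hε2 : ε / 2 ≠ 0 := (ENNReal.half_pos hε).ne'
  obtain ⟨M, g, hg, hfg⟩ := exists_lipschitzWith_measure_ne_lt hP hPfin hf hap hε2
  obtain ⟨h, hh, hgh⟩ := exists_contDiff_measure_ne_lt_of_lipschitzWith hg hPfin hε2
  refine ⟨h, hh, ?_⟩
  calc μ {x ∈ P | f x ≠ h x}
      ≤ μ ({x ∈ P | f x ≠ g x} ∪ {x ∈ P | g x ≠ h x}) := measure_mono fun x hx =>
        (hx.2.ne_or_ne (g x)).imp (fun h => ⟨hx.1, h⟩) fun h => ⟨hx.1, h.symm⟩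
    _ ≤ μ {x ∈ P | f x ≠ g x} + μ {x ∈ P | g x ≠ h x} := measure_union_le _ _
    _ < ε / 2 + ε / 2 := ENNReal.add_lt_add hfg hgh
    _ = ε := ENNReal.add_halves ε

theorem exists_C1_extension_of_approx_differentiable_general (hP : MeasurableSet P)
    (hPfin : μ P ≠ ∞) (hf : Measurable fun x : P => f x)
    (hap : ∀ᵐ a ∂μ, a ∈ P → IsApproxLipschitzAt μ P f a) {ε : ℝ≥0∞} (hε : ε ≠ 0) :
    ∃ Q, IsClosed Q ∧ Q ⊆ P ∧ μ (P \ Q) < ε ∧ ∃ g : E → F, ContDiff ℝ 1 g ∧ EqOn g f Q := by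
  have := FiniteDimensional.proper_real E
  have := FiniteDimensional.proper_real F
  have hε2 : ε / 2 ≠ 0 := (ENNReal.half_pos hε).ne'
  obtain ⟨g, hg, hfg⟩ := exists_contDiff_measure_ne_lt hP hPfin hf hap hε2
  have hA := measurableSet_sep_eq hP hf hg.continuous.measurable
  obtain ⟨Q, hQA, hQ, hAQ⟩ := hA.exists_isCompact_sdiff_lt
    (measure_ne_top_of_subset (sep_subset P _) hPfin) hε2
  refine ⟨Q, hQ.isClosed, fun x hx => (hQA hx).1, ?_, g, hg, fun x hx => (hQA hx).2.symm⟩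
  calc μ (P \ Q)
      ≤ μ ({x ∈ P | f x ≠ g x} ∪ ({x ∈ P | f x = g x} \ Q)) := measure_mono fun x hx =>
        (ne_or_eq (f x) (g x)).imp (And.intro hx.1) fun h => ⟨⟨hx.1, h⟩, hx.2⟩
    _ ≤ μ {x ∈ P | f x ≠ g x} + μ ({x ∈ P | f x = g x} \ Q) := measure_union_le _ _
    _ < ε / 2 + ε / 2 := ENNReal.add_lt_add hfg hAQ
    _ = ε := ENNReal.add_halves ε

end ApproxLipschitz

theorem IsApproxDifferential.isApproxLipschitzAt {n m : ℕ} {P : Set (EuclideanSpace ℝ (Fin n))}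
    {f : EuclideanSpace ℝ (Fin n) → EuclideanSpace ℝ (Fin m)} {a : EuclideanSpace ℝ (Fin n)}
    {L : EuclideanSpace ℝ (Fin n) →ₗ[ℝ] EuclideanSpace ℝ (Fin m)}
    (hL : IsApproxDifferential P f a L) : IsApproxLipschitzAt volume P f a := by
  refine ⟨‖L.toContinuousLinearMap‖ + 1, (hL 1 one_pos).mono_zero fun x hx => ⟨hx.1, ?_⟩⟩
  have hLx : ‖L (x - a)‖ ≤ ‖L.toContinuousLinearMap‖ * ‖x - a‖ :=
    L.toContinuousLinearMap.le_opNorm (x - a)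
  have hquot := hx.2
  rw [dist_eq_norm, dist_eq_norm] at hquot
  linarith [norm_sub_norm_le (f x - f a) (L (x - a))]

/-- A bounded measurable a.e. approximately differentiable map coincides with a
`C¹`-smooth map outside a set of arbitrarily small measure. -/
theorem exists_C1_extension_of_approx_differentiable {n m : ℕ}
    (P : Set (EuclideanSpace ℝ (Fin n))) (hP : MeasurableSet P)
    (hPb : Bornology.IsBounded P)
    (f : EuclideanSpace ℝ (Fin n) → EuclideanSpace ℝ (Fin m))
    (hf : Measurable (fun x : P => f x))
    (hap : ∀ᵐ a ∂volume, a ∈ P →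
      ∃ L : EuclideanSpace ℝ (Fin n) →ₗ[ℝ] EuclideanSpace ℝ (Fin m),
        IsApproxDifferential P f a L) :
    ∀ ε : ℝ, 0 < ε →
      ∃ Q : Set (EuclideanSpace ℝ (Fin n)), IsClosed Q ∧ Q ⊆ P ∧
        volume (P \ Q) < ENNReal.ofReal ε ∧
        ∃ g : EuclideanSpace ℝ (Fin n) → EuclideanSpace ℝ (Fin m),
          ContDiff ℝ 1 g ∧ EqOn g f Q :=
  fun _ hε => exists_C1_extension_of_approx_differentiable_general hP hPb.measure_lt_top.ne hf
    (hap.mono fun _ ha haP => (ha haP).elim fun _ hL => hL.isApproxLipschitzAt)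
    (ENNReal.ofReal_pos.2 hε).ne'
end
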